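/- arXiv:1712.07102 — 6 statements merged into one kernel-verified Lean document; each statement's English description precedes it below -/
import Mathlib

section
/- Fix ω_I ∈ ℝ^q and assume: (i) ∫_{ℝ^k} |F_R(u)| du > 0; (ii) A := ∫_{ℝ^q} F_I(ω_I')·(H_I(ω_I, ω_I') + H_I(ω_I, −ω_I')) dν_I(ω_I') ≠ 0; (iii) there exist a Lebesgue-integrable G : ℝ^k → ℝ and λ₀ > 0 such that |S(ω_I, u; λ)| / c(λ) ≤ G(u) for all u ∈ ℝ^k and all λ ≥ λ₀. Then for every ω_R ∈ ℝ^k, the ratio |S(ω_I, ω_R; λ)| / ∫_{ℝ^k} |S(ω_I, u; λ)| du converges, as λ → ∞, to |F_R(ω_R)| / ∫_{ℝ^k} |F_R(u)| du. -/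
open MeasureTheory Filter Real
open scoped Topology

/-!
By Fubini, the score of `f₀` is the spectrum integrated against the feature covariance. The
orthogonality condition splits that covariance into a direct and a reflected part, and evenness of
`F_R` identifies their `ω_R`-integrals, so that `S(ω_I, ·; l) = A · (F_R ⋆ H_R(·; l))`. After
division by `c l` the convolution tends to `F_R` pointwise, and the domination hypothesis carries
this over to the integral in the denominator; the factors `A` and `c l` cancel in the ratio.
-/

section Ratio

variable {ι α 𝕜 : Type*} [MeasurableSpace α] [RCLike 𝕜] {L : Filter ι} {ν : Measure α}

theorem tendsto_div_integral_of_dominated [L.IsCountablyGenerated] {f : ι → α → 𝕜} {c : ι → 𝕜}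
    {g : α → 𝕜} {G : α → ℝ} {w : α} (hc : ∀ᶠ l in L, c l ≠ 0)
    (hf : ∀ᶠ l in L, AEStronglyMeasurable (f l) ν) (hG : Integrable G ν)
    (hfG : ∀ᶠ l in L, ∀ᵐ u ∂ν, ‖f l u / c l‖ ≤ G u)
    (hlim : ∀ᵐ u ∂ν, Tendsto (fun l => f l u / c l) L (𝓝 (g u)))
    (hlimw : Tendsto (fun l => f l w / c l) L (𝓝 (g w))) (hg : ∫ u, g u ∂ν ≠ 0) :
    Tendsto (fun l => f l w / ∫ u, f l u ∂ν) L (𝓝 (g w / ∫ u, g u ∂ν)) := by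
  have hint : Tendsto (fun l => ∫ u, f l u / c l ∂ν) L (𝓝 (∫ u, g u ∂ν)) :=
    tendsto_integral_filter_of_dominated_convergence G
      (hf.mono fun l hl => by simpa only [div_eq_mul_inv] using hl.mul_const (c l)⁻¹) hfG hG hlim
  refine (hlimw.div hint hg).congr' ?_
  filter_upwards [hc] with l hl
  rw [Pi.div_apply, integral_div, div_div_div_cancel_right₀ hl]

end Ratio

section Score

variable {X Ω : Type*} [MeasurableSpace X] [MeasurableSpace Ω]

/-- The superposition of the features `φ · ω` with spectrum `F`; the paper's `f₀` is the case
`F (ω_I, ω_R) = F_I ω_I * F_R ω_R`. -/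
noncomputable def synthesis (ν : Measure Ω) (F : Ω → ℝ) (φ : X → Ω → ℝ) (x : X) : ℝ :=
  ∫ ω, F ω * φ x ω ∂ν

/-- The correlation `E_{x∼μ}[f(x) φ(x, ω)]` of `f` with the feature of parameter `ω`; in the
paper's notation, `S(ω; l) - err_p(ω; l)` is the case `μ = μ_l`, `f = f₀`. -/
noncomputable def score (μ : Measure X) (f : X → ℝ) (φ : X → Ω → ℝ) (ω : Ω) : ℝ :=
  ∫ x, f x * φ x ω ∂μ

variable {μ : Measure X} {ν : Measure Ω} {F : Ω → ℝ} {f : X → ℝ} {φ : X → Ω → ℝ} {C : ℝ}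

theorem aestronglyMeasurable_synthesis [SFinite ν] (hF : AEStronglyMeasurable F ν)
    (hφ : Measurable (Function.uncurry φ)) : AEStronglyMeasurable (synthesis ν F φ) μ :=
  (hF.comp_snd.mul hφ.aestronglyMeasurable).integral_prod_right'

theorem aestronglyMeasurable_score [SFinite μ] (hf : AEStronglyMeasurable f μ)
    (hφ : Measurable (Function.uncurry φ)) : AEStronglyMeasurable (score μ f φ) ν :=
  (hf.comp_snd.mul (hφ.comp measurable_swap).aestronglyMeasurable).integral_prod_right'

theorem score_synthesis [IsFiniteMeasure μ] [SFinite ν] (hF : Integrable F ν)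
    (hφ : Measurable (Function.uncurry φ)) (hφC : ∀ x ω, |φ x ω| ≤ C) (ω : Ω) :
    score μ (synthesis ν F φ) φ ω = ∫ ω', F ω' * ∫ x, φ x ω * φ x ω' ∂μ ∂ν := by
  have hφω : Measurable fun x => φ x ω := hφ.comp measurable_prodMk_right
  have hint : Integrable (Function.uncurry fun x ω' => F ω' * (φ x ω * φ x ω')) (μ.prod ν) := by
    refine (hF.comp_snd μ).mul_bdd (c := C * C)
      ((hφω.comp measurable_fst).mul hφ).aestronglyMeasurable (ae_of_all _ fun z => ?_)
    rw [norm_mul]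
    exact mul_le_mul (hφC _ _) (hφC _ _) (norm_nonneg _) ((abs_nonneg _).trans (hφC z.1 ω))
  calc score μ (synthesis ν F φ) φ ω
      = ∫ x, ∫ ω', F ω' * (φ x ω * φ x ω') ∂ν ∂μ := by
        simp only [score, synthesis, ← integral_mul_const, mul_assoc, mul_comm (φ _ ω)]
    _ = ∫ ω', ∫ x, F ω' * (φ x ω * φ x ω') ∂μ ∂ν := integral_integral_swap hint
    _ = ∫ ω', F ω' * ∫ x, φ x ω * φ x ω' ∂μ ∂ν := by simp only [integral_const_mul]

end Score

section Reflection

variable {ΩI ΩR : Type*} [MeasurableSpace ΩI] [MeasurableSpace ΩR] [AddGroup ΩR] [MeasurableNeg ΩR]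
  {νI : Measure ΩI} {νR : Measure ΩR} [νR.IsNegInvariant]
  {FI h₁ h₂ : ΩI → ℝ} {FR K : ΩR → ℝ} {w : ΩR}

theorem integrable_even_mul_comp_add (hFR : FR.Even)
    (hK : Integrable (fun u => FR u * K (w - u)) νR) :
    Integrable (fun u => FR u * K (w + u)) νR := by
  simpa only [hFR _, sub_neg_eq_add] using hK.comp_neg

theorem integral_even_mul_comp_add (hFR : FR.Even) :
    ∫ u, FR u * K (w + u) ∂νR = ∫ u, FR u * K (w - u) ∂νR := by
  rw [← integral_neg_eq_self]
  simp only [hFR _, ← sub_eq_add_neg]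

theorem integral_prod_mul_add_reflected [SFinite νI] [SFinite νR] (hFR : FR.Even)
    (h₁i : Integrable (fun a => FI a * h₁ a) νI) (h₂i : Integrable (fun a => FI a * h₂ a) νI)
    (hK : Integrable (fun u => FR u * K (w - u)) νR) :
    ∫ p, FI p.1 * FR p.2 * (h₁ p.1 * K (w - p.2) + h₂ p.1 * K (w + p.2)) ∂(νI.prod νR)
      = (∫ a, FI a * (h₁ a + h₂ a) ∂νI) * ∫ u, FR u * K (w - u) ∂νR := by
  calc ∫ p, FI p.1 * FR p.2 * (h₁ p.1 * K (w - p.2) + h₂ p.1 * K (w + p.2)) ∂(νI.prod νR)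
      = ∫ p, (FI p.1 * h₁ p.1 * (FR p.2 * K (w - p.2))
          + FI p.1 * h₂ p.1 * (FR p.2 * K (w + p.2))) ∂(νI.prod νR) := by
        congr with p
        ring
    _ = (∫ a, FI a * h₁ a ∂νI) * ∫ u, FR u * K (w - u) ∂νR
          + (∫ a, FI a * h₂ a ∂νI) * ∫ u, FR u * K (w + u) ∂νR := by
        rw [integral_add (h₁i.mul_prod hK) (h₂i.mul_prod (integrable_even_mul_comp_add hFR hK)),
          ← integral_prod_mul, ← integral_prod_mul]
    _ = (∫ a, FI a * (h₁ a + h₂ a) ∂νI) * ∫ u, FR u * K (w - u) ∂νR := by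
        rw [integral_even_mul_comp_add hFR, ← add_mul, ← integral_add h₁i h₂i]
        simp only [mul_add]

end Reflection

section Orthogonality

variable {X ΩI ΩR : Type*} [MeasurableSpace X] [MeasurableSpace ΩI] [Neg ΩI] [MeasurableNeg ΩI]
  [MeasurableSpace ΩR] [AddGroup ΩR] [MeasurableAdd ΩR] [MeasurableNeg ΩR]
  {νI : Measure ΩI} [SFinite νI] {νR : Measure ΩR} [SFinite νR]
  [νR.IsAddLeftInvariant] [νR.IsNegInvariant]
  {FI : ΩI → ℝ} {FR : ΩR → ℝ} {φ : X → ΩI × ΩR → ℝ} {HI : ΩI → ΩI → ℝ} {ωI : ΩI} {C : ℝ}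

theorem score_synthesis_eq_mul_convolution {μ : Measure X} [IsFiniteMeasure μ] {K : ΩR → ℝ}
    (hFI : Integrable FI νI) (hFR : Integrable FR νR) (hFRb : ∃ B, ∀ u, |FR u| ≤ B)
    (hFRe : FR.Even) (hφ : Measurable (Function.uncurry φ)) (hφC : ∀ x ω, |φ x ω| ≤ C)
    (hHI : Measurable (HI ωI)) (hHIb : ∃ B, ∀ a, |HI ωI a| ≤ B) (hK : Integrable K νR)
    (hOrth : ∀ w a u, ∫ x, φ x (ωI, w) * φ x (a, u) ∂μ
      = HI ωI a * K (w - u) + HI ωI (-a) * K (w + u)) (w : ΩR) :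
    score μ (synthesis (νI.prod νR) (fun p => FI p.1 * FR p.2) φ) φ (ωI, w)
      = (∫ a, FI a * (HI ωI a + HI ωI (-a)) ∂νI) * ∫ u, FR u * K (w - u) ∂νR := by
  obtain ⟨BI, hBI⟩ := hHIb
  obtain ⟨BR, hBR⟩ := hFRb
  rw [score_synthesis (hFI.mul_prod hFR) hφ hφC]
  simp only [hOrth]
  exact integral_prod_mul_add_reflected hFRe
    (hFI.mul_bdd hHI.aestronglyMeasurable (ae_of_all _ hBI))
    (hFI.mul_bdd (hHI.comp measurable_neg).aestronglyMeasurable (ae_of_all _ fun a => hBI (-a)))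
    ((hK.comp_sub_left w).bdd_mul hFR.aestronglyMeasurable (ae_of_all _ hBR))

theorem score_ratio_tendsto_spectrum_ratio_general {ι : Type*} {L : Filter ι}
    [L.IsCountablyGenerated] {μ : ι → Measure X} {K : ι → ΩR → ℝ} {c : ι → ℝ} {G : ΩR → ℝ}
    (hFI : Integrable FI νI) (hFR : Integrable FR νR) (hFRb : ∃ B, ∀ u, |FR u| ≤ B)
    (hFRe : FR.Even) (hμ : ∀ᶠ l in L, IsFiniteMeasure (μ l))
    (hφ : Measurable (Function.uncurry φ)) (hφC : ∀ x ω, |φ x ω| ≤ C)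
    (hHI : Measurable (HI ωI)) (hHIb : ∃ B, ∀ a, |HI ωI a| ≤ B)
    (hK : ∀ᶠ l in L, Integrable (K l) νR) (hc : ∀ᶠ l in L, 0 < c l)
    (hOrth : ∀ᶠ l in L, ∀ w a u, ∫ x, φ x (ωI, w) * φ x (a, u) ∂(μ l)
      = HI ωI a * K l (w - u) + HI ωI (-a) * K l (w + u))
    (hApprox : ∀ w, Tendsto (fun l => (∫ u, FR u * K l (w - u) ∂νR) / c l) L (𝓝 (FR w)))
    (hFRpos : 0 < ∫ u, |FR u| ∂νR) (hA : ∫ a, FI a * (HI ωI a + HI ωI (-a)) ∂νI ≠ 0)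
    (hG : Integrable G νR)
    (hdom : ∀ᶠ l in L, ∀ᵐ u ∂νR,
      |score (μ l) (synthesis (νI.prod νR) (fun p => FI p.1 * FR p.2) φ) φ (ωI, u)| / c l ≤ G u)
    (ωR : ΩR) :
    Tendsto (fun l =>
        |score (μ l) (synthesis (νI.prod νR) (fun p => FI p.1 * FR p.2) φ) φ (ωI, ωR)|
          / ∫ u, |score (μ l) (synthesis (νI.prod νR) (fun p => FI p.1 * FR p.2) φ) φ (ωI, u)| ∂νR)
      L (𝓝 (|FR ωR| / ∫ u, |FR u| ∂νR)) := by
  set f₀ := synthesis (νI.prod νR) (fun p => FI p.1 * FR p.2) φ with hf₀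
  set A := ∫ a, FI a * (HI ωI a + HI ωI (-a)) ∂νI
  have hlim (w : ΩR) :
      Tendsto (fun l => |score (μ l) f₀ φ (ωI, w)| / c l) L (𝓝 (|A| * |FR w|)) := by
    rw [← abs_mul]
    refine ((hApprox w).const_mul A).abs.congr' ?_
    filter_upwards [hμ, hK, hc, hOrth] with l _ hKl hcl hOl
    rw [hf₀, score_synthesis_eq_mul_convolution hFI hFR hFRb hFRe hφ hφC hHI hHIb hKl hOl,
      ← mul_div_assoc, abs_div, abs_of_pos hcl]
  have hmeas : ∀ᶠ l in L, AEStronglyMeasurable (fun u => |score (μ l) f₀ φ (ωI, u)|) νR := by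
    filter_upwards [hμ] with l _
    have hf₀m := aestronglyMeasurable_synthesis (μ := μ l) (hFI.mul_prod hFR).1 hφ
    have hφI : Measurable (Function.uncurry fun x u => φ x (ωI, u)) :=
      hφ.comp (measurable_fst.prodMk (measurable_const.prodMk measurable_snd))
    exact (aestronglyMeasurable_score hf₀m hφI).norm
  have hbound : ∀ᶠ l in L, ∀ᵐ u ∂νR, ‖|score (μ l) f₀ φ (ωI, u)| / c l‖ ≤ G u := by
    filter_upwards [hc, hdom] with l hcl hl
    simpa only [norm_div, norm_eq_abs, abs_abs, abs_of_pos hcl] using hl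
  have hA' : |A| ≠ 0 := abs_ne_zero.mpr hA
  have hratio := tendsto_div_integral_of_dominated (hc.mono fun _ => ne_of_gt) hmeas hG hbound
    (ae_of_all _ hlim) (hlim ωR) (by rw [integral_const_mul]; exact mul_ne_zero hA' hFRpos.ne')
  rwa [integral_const_mul, mul_div_mul_left _ _ hA'] at hratio

end Orthogonality

/-- the normalized score ratio converges to the normalized spectrum ratio. -/
theorem score_ratio_tendsto_spectrum_ratio
    (q k : ℕ) (X : Type*) [MeasurableSpace X]
    (νI : Measure (Fin q → ℝ)) [IsFiniteMeasure νI]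
    (FI : (Fin q → ℝ) → ℝ) (FR : (Fin k → ℝ) → ℝ)
    (hFIc : Continuous FI) (hFIb : ∃ C, ∀ a, |FI a| ≤ C) (hFIi : Integrable FI νI)
    (hFRc : Continuous FR) (hFRb : ∃ C, ∀ u, |FR u| ≤ C) (hFRi : Integrable FR)
    (hFRe : ∀ u, FR (-u) = FR u)
    (μ : ℝ → Measure X) (hμ : ∀ l, 0 < l → IsProbabilityMeasure (μ l))
    (φ : X → (Fin q → ℝ) × (Fin k → ℝ) → ℝ)
    (hφm : Measurable (Function.uncurry φ))
    (hφb : ∀ x ω, |φ x ω| ≤ 1)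
    (HI : (Fin q → ℝ) → (Fin q → ℝ) → ℝ)
    (hHIc : Continuous (Function.uncurry HI)) (hHIb : ∃ C, ∀ a b, |HI a b| ≤ C)
    (HR : (Fin k → ℝ) → ℝ → ℝ)
    (hHRnn : ∀ u l, 0 < l → 0 ≤ HR u l)
    (hHRi : ∀ l, 0 < l → Integrable (fun u => HR u l))
    (c : ℝ → ℝ) (hc : ∀ l, c l = ∫ u, HR u l) (hcpos : ∀ l, 0 < l → 0 < c l)
    (f₀ : X → ℝ)
    (hf₀ : ∀ x, f₀ x = ∫ p : (Fin q → ℝ) × (Fin k → ℝ),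
        FI p.1 * FR p.2 * φ x p ∂(νI.prod volume))
    (S : (Fin q → ℝ) → (Fin k → ℝ) → ℝ → ℝ)
    (hS : ∀ θ w l, S θ w l = ∫ x, f₀ x * φ x (θ, w) ∂(μ l))
    (hOrth : ∀ l, 0 < l → ∀ ωI ωR ωI' ωR',
      (∫ x, φ x (ωI, ωR) * φ x (ωI', ωR') ∂(μ l))
        = HI ωI ωI' * HR (ωR - ωR') l + HI ωI (-ωI') * HR (ωR + ωR') l)
    (hApprox : ∀ g : (Fin k → ℝ) → ℝ, Continuous g → (∃ C, ∀ u, |g u| ≤ C) → ∀ v : Fin k → ℝ,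
      Tendsto (fun l => (∫ u, g u * HR (v - u) l) / c l) atTop (nhds (g v)))
    -- fixed ωI and the assumptions (i)-(iii)
    (ωI : Fin q → ℝ)
    (hFRpos : 0 < ∫ u, |FR u|)
    (hA : (∫ a, FI a * (HI ωI a + HI ωI (-a)) ∂νI) ≠ 0)
    (hdom : ∃ G : (Fin k → ℝ) → ℝ, Integrable G ∧ ∃ l₀ > (0 : ℝ),
      ∀ u : Fin k → ℝ, ∀ l, l₀ ≤ l → |S ωI u l| / c l ≤ G u) :
    ∀ ωR : Fin k → ℝ,
      Tendsto (fun l => |S ωI ωR l| / ∫ u, |S ωI u l|) atTop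
        (nhds (|FR ωR| / ∫ u, |FR u|)) := by
  obtain ⟨G, hG, l₀, -, hSG⟩ := hdom
  obtain rfl : f₀ = synthesis (νI.prod volume) (fun p => FI p.1 * FR p.2) φ := funext hf₀
  obtain rfl : S = fun θ w l => score (μ l) _ φ (θ, w) := by ext; apply hS
  have hpos : ∀ᶠ l : ℝ in atTop, 0 < l := eventually_gt_atTop 0
  exact score_ratio_tendsto_spectrum_ratio_general hFIi hFRi hFRb hFRe
    (hpos.mono fun l hl => have := hμ l hl; inferInstance) hφm hφb
    (hHIc.uncurry_left ωI).measurable (hHIb.imp fun _ h => h ωI) (hpos.mono hHRi)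
    (hpos.mono hcpos) (hpos.mono fun l hl => hOrth l hl ωI)
    (hApprox FR hFRc hFRb) hFRpos hA hG
    ((eventually_ge_atTop l₀).mono fun l hl => ae_of_all _ fun u => hSG u l hl)
end

section
/- Assume each component x_i ∼ N(0, σ_i²). Fix θ ∈ [0,2π) with cos θ ≠ 0, assume ∫_0^{2π} F_I(θ') cos θ' dθ' ≠ 0, and assume there exist an integrable G : ℝ^d → ℝ and Σ₀ > 0 such that (∏_{i=1}^d σ_i/√(2π)) · |S(θ, u; σ)| ≤ G(u) for all u ∈ ℝ^d whenever min_i σ_i ≥ Σ₀. Then for every w ∈ ℝ^d, |S(θ, w; σ)| / ∫_{ℝ^d} |S(θ, u; σ)| du → |F_R(w)| / ∫_{ℝ^d} |F_R(u)| du as min_i σ_i → ∞ (i.e., for every ε > 0 there exists Σ such that the ratio is within ε of the limit whenever min_i σ_i > Σ). -/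
/-!
Since `FR` is even, `f₀ x * cos (w ⬝ᵥ x + θ) = A * ∫ v, FR v * cos ((v - w) ⬝ᵥ x - θ)` with
`A = ∫ t in 0..2π, FI t * cos t`. The Gaussian expectation of the right-hand side integrates `FR`
against `exp (-‖σ * (v - w)‖² / 2)` (Euclidean norm), which is proportional to the density of
`N(w, σ⁻²)`. So, up to a nonzero factor independent of `w` that cancels in the ratio, the score at
`w` is the average of `FR` around `w` under the Gaussian law with standard deviations `σ⁻¹`. As
`σ → ∞` this law concentrates at the origin: the averages converge to `FR` pointwise by dominated
convergence, and in `L¹` because translation is continuous in `L¹`.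
-/

open MeasureTheory Filter Real ProbabilityTheory
open scoped Topology

section Translates

variable {G E : Type*} [AddGroup G] [MeasurableSpace G] [NormedAddCommGroup E]

lemma continuous_integral_norm_translate_sub [TopologicalSpace G] [IsTopologicalAddGroup G]
    [BorelSpace G] {ν : Measure G} [IsLocallyFiniteMeasure ν] [ν.InnerRegularCompactLTTop]
    [ν.IsAddLeftInvariant] {F : G → E} (hF : Integrable F ν) :
    Continuous fun x ↦ ∫ u, ‖F (x + u) - F u‖ ∂ν := by
  have : Fact ((1 : ENNReal) ≠ ⊤) := ⟨ENNReal.one_ne_top⟩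
  have hFLp : MemLp F 1 ν := memLp_one_iff_integrable.2 hF
  have hdist (x : G) :
      dist (DomAddAct.mk x +ᵥ hFLp.toLp F) (hFLp.toLp F) = ∫ u, ‖F (x + u) - F u‖ ∂ν := by
    rw [L1.dist_eq_integral_dist]
    refine integral_congr_ae ?_
    filter_upwards [hFLp.coeFn_toLp,
      DomAddAct.vadd_Lp_ae_eq (DomAddAct.mk x) (hFLp.toLp F),
      (measurePreserving_add_left ν x).quasiMeasurePreserving.ae hFLp.coeFn_toLp] with u hu hxu hux
    rw [hxu, hu, dist_eq_norm]
    simp [hux]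
  simp_rw [← hdist]
  exact (DomAddAct.continuous_mk.vadd continuous_const).dist continuous_const

lemma integral_norm_translate_sub_le [MeasurableAdd G] {ν : Measure G} [ν.IsAddLeftInvariant]
    {F : G → E} (hF : Integrable F ν) (x : G) :
    ∫ u, ‖F (x + u) - F u‖ ∂ν ≤ 2 * ∫ u, ‖F u‖ ∂ν := by
  have hFx : Integrable (fun u ↦ F (x + u)) ν := hF.comp_add_left x
  calc
    ∫ u, ‖F (x + u) - F u‖ ∂ν ≤ ∫ u, (‖F (x + u)‖ + ‖F u‖) ∂ν :=
      integral_mono (hFx.sub hF).norm (hFx.norm.add hF.norm) fun u ↦ norm_sub_le _ _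
    _ = 2 * ∫ u, ‖F u‖ ∂ν := by
      rw [integral_add hFx.norm hF.norm, integral_add_left_eq_self (fun u ↦ ‖F u‖) x, two_mul]

lemma integrable_translate_prod [MeasurableAdd₂ G] {μ ν : Measure G} [IsFiniteMeasure μ]
    [SFinite ν] [ν.IsAddLeftInvariant] {F : G → E} (hFm : StronglyMeasurable F)
    (hF : Integrable F ν) : Integrable (fun p : G × G ↦ F (p.1 + p.2)) (μ.prod ν) := by
  refine (integrable_prod_iff (hFm.comp_measurable (by fun_prop)).aestronglyMeasurable).2
    ⟨ae_of_all _ hF.comp_add_left, ?_⟩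
  simp [integral_add_left_eq_self fun u ↦ ‖F u‖]

variable [NormedSpace ℝ E]

lemma abs_integral_norm_integral_translate_sub_le [MeasurableAdd₂ G] {μ ν : Measure G}
    [IsProbabilityMeasure μ] [SFinite ν] [ν.IsAddLeftInvariant] [CompleteSpace E] {F : G → E}
    (hFm : StronglyMeasurable F) (hF : Integrable F ν) :
    |(∫ u, ‖∫ x, F (x + u) ∂μ‖ ∂ν) - ∫ u, ‖F u‖ ∂ν| ≤ ∫ x, ∫ u, ‖F (x + u) - F u‖ ∂ν ∂μ := by
  have hprod := integrable_translate_prod (μ := μ) hFm hF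
  have hdiff : Integrable (fun p : G × G ↦ F (p.1 + p.2) - F p.2) (μ.prod ν) :=
    hprod.sub (hF.comp_snd μ)
  have havg : Integrable (fun u ↦ ∫ x, F (x + u) ∂μ) ν := hprod.integral_prod_right
  calc
    _ = |∫ u, (‖∫ x, F (x + u) ∂μ‖ - ‖F u‖) ∂ν| := by rw [integral_sub havg.norm hF.norm]
    _ ≤ ∫ u, ∫ x, ‖F (x + u) - F u‖ ∂μ ∂ν := by
      rw [← Real.norm_eq_abs]
      refine norm_integral_le_of_norm_le hdiff.norm.integral_prod_right ?_
      filter_upwards [hprod.prod_left_ae] with u hu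
      calc
        |‖∫ x, F (x + u) ∂μ‖ - ‖F u‖| ≤ ‖(∫ x, F (x + u) ∂μ) - F u‖ := abs_norm_sub_norm_le _ _
        _ = ‖∫ x, (F (x + u) - F u) ∂μ‖ := by
          rw [integral_sub hu (integrable_const _), integral_const, probReal_univ, one_smul]
        _ ≤ ∫ x, ‖F (x + u) - F u‖ ∂μ := norm_integral_le_integral_norm (μ := μ) _
    _ = ∫ x, ∫ u, ‖F (x + u) - F u‖ ∂ν ∂μ := (integral_integral_swap hdiff.norm).symm

end Translates

lemma exists_forall_lt_of_eventually_atTop {ι α : Type*} [Finite ι] [SemilatticeSup α]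
    [Nonempty α] {p : (ι → α) → Prop} (hp : ∀ᶠ σ in atTop, p σ) :
    ∃ T, ∀ σ : ι → α, (∀ i, T < σ i) → p σ := by
  obtain ⟨a, ha⟩ := hp.exists_forall_of_atTop
  obtain ⟨T, hT⟩ := (Set.finite_range a).bddAbove
  exact ⟨T, fun σ hσ ↦ ha σ fun i ↦ (hT ⟨i, rfl⟩).trans (hσ i).le⟩

lemma tendsto_inv_atTop_pi {ι 𝕜 : Type*} [Field 𝕜] [LinearOrder 𝕜] [IsStrictOrderedRing 𝕜]
    [TopologicalSpace 𝕜] [OrderTopology 𝕜] : Tendsto (fun σ : ι → 𝕜 ↦ σ⁻¹) atTop (𝓝 0) :=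
  tendsto_pi_nhds.2 fun i ↦ tendsto_inv_atTop_zero.comp
    (Function.monotone_eval i |>.tendsto_atTop_atTop fun b ↦ ⟨fun _ ↦ b, le_rfl⟩)

lemma pi_withDensity_ofReal {ι : Type*} [Fintype ι] {α : ι → Type*} [∀ i, MeasurableSpace (α i)]
    {μ : ∀ i, Measure (α i)} [∀ i, SigmaFinite (μ i)] {f : ∀ i, α i → ℝ}
    (hf : ∀ i, Integrable (f i) (μ i)) (hf₀ : ∀ i x, 0 ≤ f i x) :
    Measure.pi (fun i ↦ (μ i).withDensity fun x ↦ ENNReal.ofReal (f i x)) =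
      (Measure.pi μ).withDensity fun x ↦ ENNReal.ofReal (∏ i, f i (x i)) := by
  have (i : ι) : SigmaFinite ((μ i).withDensity fun x ↦ ENNReal.ofReal (f i x)) :=
    SigmaFinite.withDensity_ofReal _
  refine Measure.pi_eq fun s hs ↦ ?_
  have hint (i : ι) : Integrable (f i) ((μ i).restrict (s i)) := (hf i).restrict
  calc
    _ = ENNReal.ofReal (∫ x, ∏ i, f i (x i) ∂Measure.pi fun i ↦ (μ i).restrict (s i)) := by
      rw [withDensity_apply _ (.univ_pi hs), Measure.restrict_pi_pi,
        ofReal_integral_eq_lintegral_ofReal (.fintype_prod_dep hint)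
          (ae_of_all _ fun x ↦ Finset.prod_nonneg fun i _ ↦ hf₀ i (x i))]
    _ = ∏ i, ENNReal.ofReal (∫ x in s i, f i x ∂μ i) := by
      rw [integral_fintype_prod_eq_prod,
        ENNReal.ofReal_prod_of_nonneg fun i _ ↦ integral_nonneg (hf₀ i)]
    _ = _ := Finset.prod_congr rfl fun i _ ↦ by
      rw [withDensity_apply _ (hs i),
        ofReal_integral_eq_lintegral_ofReal (hint i) (ae_of_all _ (hf₀ i))]

section GaussianInput

variable {ι : Type*} [Fintype ι]

/-- The law of a random vector with independent components of law `N(0, σ i ^ 2)`, including the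
degenerate case `σ i = 0`, where the component is almost surely zero. -/
noncomputable def gaussianInput (σ : ι → ℝ) : Measure (ι → ℝ) :=
  Measure.pi fun i ↦ gaussianReal 0 (σ i ^ 2).toNNReal

instance isProbabilityMeasure_gaussianInput (σ : ι → ℝ) : IsProbabilityMeasure (gaussianInput σ) :=
  inferInstanceAs (IsProbabilityMeasure (Measure.pi _))

lemma map_mul_gaussianInput (a σ : ι → ℝ) :
    (gaussianInput σ).map (a * ·) = gaussianInput (a * σ) := by
  have hmap (i : ι) : (gaussianReal 0 (σ i ^ 2).toNNReal).map (a i * ·) =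
      gaussianReal 0 ((a * σ) i ^ 2).toNNReal := by
    rw [gaussianReal_map_const_mul, mul_zero]
    congr 1
    ext
    simp [mul_pow, sq_nonneg, mul_nonneg]
  have (i : ι) : SigmaFinite ((gaussianReal 0 (σ i ^ 2).toNNReal).map (a i * ·)) := by
    rw [hmap]; infer_instance
  simp_rw [gaussianInput, ← hmap]
  exact Measure.pi_map_pi fun i ↦ (measurable_const_mul (a i)).aemeasurable

lemma integral_gaussianInput_eq_integral_smul {E : Type*} [NormedAddCommGroup E]
    [NormedSpace ℝ E] {σ : ι → ℝ} (hσ : ∀ i, σ i ≠ 0) (f : (ι → ℝ) → E) :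
    ∫ x, f x ∂gaussianInput σ =
      ∫ x, (∏ i, gaussianPDFReal 0 (σ i ^ 2).toNNReal (x i)) • f x := by
  have hvar (i : ι) : (σ i ^ 2).toNNReal ≠ 0 := by simp [hσ i]
  have hdensity : gaussianInput σ = volume.withDensity fun x ↦
      ENNReal.ofReal (∏ i, gaussianPDFReal 0 (σ i ^ 2).toNNReal (x i)) := by
    simp_rw [gaussianInput, gaussianReal_of_var_ne_zero _ (hvar _), gaussianPDF_def, volume_pi]
    exact pi_withDensity_ofReal (fun i ↦ integrable_gaussianPDFReal _ _)
      fun i ↦ gaussianPDFReal_nonneg _ _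
  rw [hdensity, integral_withDensity_eq_integral_toReal_smul (by fun_prop) (by simp)]
  simp_rw [ENNReal.toReal_ofReal
    (Finset.prod_nonneg fun i _ ↦ gaussianPDFReal_nonneg 0 (σ i ^ 2).toNNReal _)]

lemma tendsto_integral_gaussianInput {E : Type*} [NormedAddCommGroup E] [NormedSpace ℝ E]
    [CompleteSpace E] {f : (ι → ℝ) → E} (hfm : StronglyMeasurable f) (hfb : ∃ C, ∀ x, ‖f x‖ ≤ C)
    (hf : ContinuousAt f 0) :
    Tendsto (fun a ↦ ∫ x, f x ∂gaussianInput a) (𝓝 0) (𝓝 (f 0)) := by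
  obtain ⟨C, hC⟩ := hfb
  have hscale (a : ι → ℝ) : ∫ x, f x ∂gaussianInput a = ∫ z, f (a * z) ∂gaussianInput 1 := by
    rw [← integral_map (φ := (a * ·)) (by fun_prop) hfm.aestronglyMeasurable,
      map_mul_gaussianInput, mul_one]
  have hlim (z : ι → ℝ) : Tendsto (fun a ↦ f (a * z)) (𝓝 0) (𝓝 (f 0)) := by
    refine hf.tendsto.comp ?_
    simpa using (continuous_mul_const z).tendsto 0
  simp_rw [hscale]
  simpa using tendsto_integral_filter_of_dominated_convergence (μ := gaussianInput 1) (fun _ ↦ C)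
    (.of_forall fun a ↦ (hfm.comp_measurable (by fun_prop)).aestronglyMeasurable)
    (.of_forall fun a ↦ ae_of_all _ fun z ↦ hC _) (integrable_const C) (ae_of_all _ hlim)

lemma tendsto_integral_norm_integral_gaussianInput {E : Type*} [NormedAddCommGroup E]
    [NormedSpace ℝ E] [CompleteSpace E] {F : (ι → ℝ) → E} (hFm : StronglyMeasurable F)
    (hF : Integrable F) :
    Tendsto (fun a ↦ ∫ u, ‖∫ x, F (x + u) ∂gaussianInput a‖) (𝓝 0) (𝓝 (∫ u, ‖F u‖)) := by
  have hcont := continuous_integral_norm_translate_sub hF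
  have hbound : ∃ C, ∀ x, ‖∫ u, ‖F (x + u) - F u‖‖ ≤ C := by
    refine ⟨2 * ∫ u, ‖F u‖, fun x ↦ ?_⟩
    rw [norm_of_nonneg (by positivity)]
    exact integral_norm_translate_sub_le hF x
  have hmodulus := tendsto_integral_gaussianInput hcont.stronglyMeasurable hbound
    hcont.continuousAt
  simp only [zero_add, sub_self, norm_zero, integral_zero] at hmodulus
  exact tendsto_iff_norm_sub_tendsto_zero.2 <|
    squeeze_zero (fun _ ↦ norm_nonneg _)
      (fun _ ↦ abs_integral_norm_integral_translate_sub_le hFm hF) hmodulus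

lemma integral_cexp_dotProduct_gaussianInput (σ v : ι → ℝ) :
    ∫ x, Complex.exp ((v ⬝ᵥ x : ℝ) * Complex.I) ∂gaussianInput σ =
      (rexp (-(∑ i, (σ i * v i) ^ 2) / 2) : ℝ) := by
  calc
    _ = ∫ x : ι → ℝ, ∏ i, Complex.exp (v i * x i * Complex.I) ∂gaussianInput σ := by
      simp_rw [dotProduct, ← Complex.exp_sum, ← Finset.sum_mul]
      push_cast
      rfl
    _ = ∏ i, Complex.exp (-(σ i * v i) ^ 2 / 2) := by
      rw [gaussianInput,
        integral_fintype_prod_eq_prod fun i (y : ℝ) ↦ Complex.exp (v i * y * Complex.I)]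
      simp_rw [← charFun_apply_real, charFun_gaussianReal, Real.coe_toNNReal _ (sq_nonneg _)]
      simp [mul_pow, neg_div]
    _ = _ := by
      rw [← Complex.exp_sum, ← Finset.sum_div, Finset.sum_neg_distrib]
      push_cast
      rfl

lemma integral_cos_dotProduct_add_gaussianInput (σ v : ι → ℝ) (t : ℝ) :
    ∫ x, cos (v ⬝ᵥ x + t) ∂gaussianInput σ = rexp (-(∑ i, (σ i * v i) ^ 2) / 2) * cos t := by
  have hint : Integrable (fun x : ι → ℝ ↦
      Complex.exp ((v ⬝ᵥ x : ℝ) * Complex.I) * Complex.exp (t * Complex.I)) (gaussianInput σ) := by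
    refine .of_bound (Continuous.aestronglyMeasurable (by fun_prop)) 1 (ae_of_all _ fun x ↦ ?_)
    simp [Complex.norm_exp_ofReal_mul_I]
  have hre (x : ι → ℝ) : cos (v ⬝ᵥ x + t) =
      RCLike.re (Complex.exp ((v ⬝ᵥ x : ℝ) * Complex.I) * Complex.exp (t * Complex.I)) := by
    rw [← Complex.exp_add, ← add_mul, ← Complex.ofReal_add, RCLike.re_to_complex,
      Complex.exp_ofReal_mul_I_re]
  simp_rw [hre]
  rw [integral_re hint, integral_mul_const, integral_cexp_dotProduct_gaussianInput,
    RCLike.re_to_complex, Complex.re_ofReal_mul, Complex.exp_ofReal_mul_I_re]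

end GaussianInput

section CosineIntegrals

lemma integrable_mul_cos {α : Type*} [MeasurableSpace α] {μ : Measure α} {F g : α → ℝ}
    (hF : Integrable F μ) (hg : AEStronglyMeasurable g μ) :
    Integrable (fun v ↦ F v * cos (g v)) μ :=
  hF.mul_bdd (c := 1) (continuous_cos.comp_aestronglyMeasurable hg)
    (ae_of_all _ fun v ↦ abs_cos_le_one (g v))

lemma integral_eq_zero_of_odd {G E : Type*} [AddGroup G] [MeasurableSpace G] [MeasurableNeg G]
    [NormedAddCommGroup E] [NormedSpace ℝ E] {μ : Measure G} [μ.IsNegInvariant] {f : G → E}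
    (hf : f.Odd) : ∫ v, f v ∂μ = 0 := by
  have hneg : ∫ v, f v ∂μ = -∫ v, f v ∂μ := by
    rw [← integral_neg, ← integral_neg_eq_self f]
    simp_rw [hf.eq]
  have : IsAddTorsionFree E := .of_isTorsionFree ℝ E
  exact self_eq_neg.1 hneg

lemma integral_mul_cos_add_of_even_of_odd {G : Type*} [AddGroup G] [MeasurableSpace G]
    [MeasurableNeg G] {μ : Measure G} [μ.IsNegInvariant] {F φ : G → ℝ} (hF : Integrable F μ)
    (hFe : F.Even) (hφm : AEStronglyMeasurable φ μ) (hφ : φ.Odd) (t : ℝ) :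
    ∫ v, F v * cos (φ v + t) ∂μ = (∫ v, F v * cos (φ v) ∂μ) * cos t := by
  have hcos : Integrable (fun v ↦ F v * cos (φ v)) μ := integrable_mul_cos hF hφm
  have hsin : Integrable (fun v ↦ F v * sin (φ v)) μ := by
    simpa [cos_sub_pi_div_two] using
      integrable_mul_cos hF (hφm.sub (aestronglyMeasurable_const (b := π / 2)))
  have hsin_zero : ∫ v, F v * sin (φ v) ∂μ = 0 :=
    integral_eq_zero_of_odd fun v ↦ by rw [hFe.eq, hφ.eq, sin_neg, mul_neg]
  simp_rw [cos_add, mul_sub, ← mul_assoc]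
  rw [integral_sub (hcos.mul_const _) (hsin.mul_const _), integral_mul_const, integral_mul_const,
    hsin_zero, zero_mul, sub_zero]

end CosineIntegrals

section Score

variable {ι : Type*} [Fintype ι]

lemma integral_mul_cos_dotProduct_add {F : (ι → ℝ) → ℝ} (hF : Integrable F) (hFe : F.Even)
    (x : ι → ℝ) (t : ℝ) :
    ∫ v, F v * cos (v ⬝ᵥ x + t) = (∫ v, F v * cos (v ⬝ᵥ x)) * cos t :=
  integral_mul_cos_add_of_even_of_odd hF hFe (Continuous.aestronglyMeasurable (by fun_prop))
    (fun v ↦ neg_dotProduct v x) t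

/-- The paper's target function `f₀`: the superposition of the waves `x ↦ cos (v ⬝ᵥ x + t)`, whose
spectrum at phase `t` and frequency `v` is `FI t * FR v`. -/
noncomputable def cosineSuperposition (FI : ℝ → ℝ) (FR : (ι → ℝ) → ℝ) (x : ι → ℝ) : ℝ :=
  ∫ t in (0 : ℝ)..(2 * π), ∫ v, FI t * FR v * cos (v ⬝ᵥ x + t)

/-- The correlation of `f` with the wave of phase `θ` and frequency `w` under the input law
`gaussianInput σ`; for `f = f₀` it is the paper's `S(ω; λ) - err_p(ω; λ)` with `ω = (θ, w)`. -/
noncomputable def gaussianScore (f : (ι → ℝ) → ℝ) (θ : ℝ) (w σ : ι → ℝ) : ℝ :=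
  ∫ x, f x * cos (w ⬝ᵥ x + θ) ∂gaussianInput σ

lemma cosineSuperposition_eq_mul_integral (FI : ℝ → ℝ) {FR : (ι → ℝ) → ℝ} (hFR : Integrable FR)
    (hFRe : FR.Even) (x : ι → ℝ) :
    cosineSuperposition FI FR x =
      (∫ t in (0 : ℝ)..(2 * π), FI t * cos t) * ∫ v, FR v * cos (v ⬝ᵥ x) := by
  simp_rw [cosineSuperposition, mul_assoc, integral_const_mul,
    integral_mul_cos_dotProduct_add hFR hFRe]
  rw [← intervalIntegral.integral_mul_const]
  congr with t
  ring

lemma gaussianScore_integral_mul_cos {F : (ι → ℝ) → ℝ} (hF : Integrable F) (hFe : F.Even)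
    (θ : ℝ) (w σ : ι → ℝ) :
    gaussianScore (fun x ↦ ∫ v, F v * cos (v ⬝ᵥ x)) θ w σ =
      cos θ * ∫ v, F v * rexp (-(∑ i, (σ i * (v i - w i)) ^ 2) / 2) := by
  have hphase (x : ι → ℝ) : (∫ v, F v * cos (v ⬝ᵥ x)) * cos (w ⬝ᵥ x + θ) =
      ∫ v, F v * cos ((v - w) ⬝ᵥ x + -θ) := by
    rw [← cos_neg, ← integral_mul_cos_dotProduct_add hF hFe]
    simp_rw [sub_dotProduct]
    congr with v
    ring_nf
  have hint : Integrable (fun p : (ι → ℝ) × (ι → ℝ) ↦ F p.2 * cos ((p.2 - w) ⬝ᵥ p.1 + -θ))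
      ((gaussianInput σ).prod volume) :=
    integrable_mul_cos (hF.comp_snd _) (Continuous.aestronglyMeasurable (by fun_prop))
  simp_rw [gaussianScore, hphase]
  rw [integral_integral_swap hint]
  simp_rw [integral_const_mul, integral_cos_dotProduct_add_gaussianInput, ← mul_assoc,
    integral_mul_const, cos_neg, mul_comm (cos θ), Pi.sub_apply]

lemma prod_gaussianPDFReal_inv {σ : ι → ℝ} (hσ : ∀ i, 0 < σ i) (x : ι → ℝ) :
    ∏ i, gaussianPDFReal 0 ((σ⁻¹) i ^ 2).toNNReal (x i) =
      (∏ i, σ i / √(2 * π)) * rexp (-(∑ i, (σ i * x i) ^ 2) / 2) := by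
  rw [← Finset.sum_neg_distrib, Finset.sum_div, exp_sum, ← Finset.prod_mul_distrib]
  refine Finset.prod_congr rfl fun i _ ↦ ?_
  have hσi := hσ i
  rw [gaussianPDFReal_def, coe_toNNReal _ (sq_nonneg _), Pi.inv_apply, inv_pow,
    sqrt_mul (by positivity), sqrt_inv, sqrt_sq hσi.le]
  simp only [sub_zero]
  field_simp

lemma integral_add_gaussianInput_inv {σ : ι → ℝ} (hσ : ∀ i, 0 < σ i) (F : (ι → ℝ) → ℝ)
    (w : ι → ℝ) :
    ∫ x, F (x + w) ∂gaussianInput σ⁻¹ =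
      (∏ i, σ i / √(2 * π)) * ∫ v, F v * rexp (-(∑ i, (σ i * (v i - w i)) ^ 2) / 2) := by
  have hσinv (i : ι) : (σ⁻¹) i ≠ 0 := inv_ne_zero (hσ i).ne'
  rw [integral_gaussianInput_eq_integral_smul hσinv, ← integral_const_mul,
    ← integral_sub_right_eq_self _ w]
  simp_rw [prod_gaussianPDFReal_inv hσ, sub_add_cancel, Pi.sub_apply, smul_eq_mul]
  congr with v
  ring

lemma prod_mul_gaussianScore_cosineSuperposition (FI : ℝ → ℝ) {FR : (ι → ℝ) → ℝ}
    (hFR : Integrable FR) (hFRe : FR.Even) (θ : ℝ) {σ : ι → ℝ} (hσ : ∀ i, 0 < σ i) (w : ι → ℝ) :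
    (∏ i, σ i / √(2 * π)) * gaussianScore (cosineSuperposition FI FR) θ w σ =
      (∫ t in (0 : ℝ)..(2 * π), FI t * cos t) * cos θ *
        ∫ x, FR (x + w) ∂gaussianInput σ⁻¹ := by
  have hscore : gaussianScore (cosineSuperposition FI FR) θ w σ =
      (∫ t in (0 : ℝ)..(2 * π), FI t * cos t) *
        gaussianScore (fun x ↦ ∫ v, FR v * cos (v ⬝ᵥ x)) θ w σ := by
    simp_rw [gaussianScore, cosineSuperposition_eq_mul_integral FI hFR hFRe, mul_assoc,
      integral_const_mul]
  rw [hscore, gaussianScore_integral_mul_cos hFR hFRe, integral_add_gaussianInput_inv hσ]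
  ring

lemma abs_gaussianScore_div_integral {FI : ℝ → ℝ} {FR : (ι → ℝ) → ℝ} (hFR : Integrable FR)
    (hFRe : FR.Even) (hFIcos : (∫ t in (0 : ℝ)..(2 * π), FI t * cos t) ≠ 0) {θ : ℝ}
    (hcosθ : cos θ ≠ 0) {σ : ι → ℝ} (hσ : ∀ i, 0 < σ i) (w : ι → ℝ) :
    |gaussianScore (cosineSuperposition FI FR) θ w σ| /
        ∫ u, |gaussianScore (cosineSuperposition FI FR) θ u σ| =
      |∫ x, FR (x + w) ∂gaussianInput σ⁻¹| / ∫ u, |∫ x, FR (x + u) ∂gaussianInput σ⁻¹| := by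
  have hc : (∏ i, σ i / √(2 * π)) ≠ 0 :=
    Finset.prod_ne_zero_iff.2 fun i _ ↦ div_ne_zero (hσ i).ne' (by positivity)
  rw [← mul_div_mul_left _ _ (abs_ne_zero.2 hc), ← integral_const_mul,
    ← mul_div_mul_left (|∫ x, FR (x + w) ∂gaussianInput σ⁻¹|) _
      (abs_ne_zero.2 (mul_ne_zero hFIcos hcosθ)), ← integral_const_mul]
  simp_rw [← abs_mul, prod_mul_gaussianScore_cosineSuperposition FI hFR hFRe θ hσ]

theorem score_ratio_recovers_spectrum_gaussian_general {FI : ℝ → ℝ} {FR : (ι → ℝ) → ℝ}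
    (hFRm : Measurable FR) (hFRb : ∃ C, ∀ u, |FR u| ≤ C) (hFR : Integrable FR)
    (hFRe : FR.Even) (hFRpos : 0 < ∫ u, |FR u|)
    (hFIcos : (∫ t in (0 : ℝ)..(2 * π), FI t * cos t) ≠ 0) {θ : ℝ} (hcosθ : cos θ ≠ 0)
    {w : ι → ℝ} (hw : ContinuousAt FR w) :
    Tendsto (fun σ ↦ |gaussianScore (cosineSuperposition FI FR) θ w σ| /
      ∫ u, |gaussianScore (cosineSuperposition FI FR) θ u σ|) atTop
      (𝓝 (|FR w| / ∫ u, |FR u|)) := by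
  have hnum : Tendsto (fun a ↦ ∫ x, FR (x + w) ∂gaussianInput a) (𝓝 0) (𝓝 (FR w)) := by
    obtain ⟨C, hC⟩ := hFRb
    have hw₀ : ContinuousAt (fun x ↦ FR (x + w)) 0 :=
      hw.comp_of_eq (by fun_prop) (zero_add w)
    simpa using tendsto_integral_gaussianInput
      (hFRm.comp (measurable_add_const w)).stronglyMeasurable ⟨C, fun x ↦ hC (x + w)⟩ hw₀
  have hden := tendsto_integral_norm_integral_gaussianInput hFRm.stronglyMeasurable hFR
  refine ((hnum.abs.div hden hFRpos.ne').comp tendsto_inv_atTop_pi).congr' ?_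
  filter_upwards [eventually_ge_atTop 1] with σ hσ
  have hσpos (i : ι) : 0 < σ i := one_pos.trans_le (hσ i)
  exact (abs_gaussianScore_div_integral hFR hFRe hFIcos hcosθ hσpos w).symm

end Score

/-- Gaussian inputs — the normalized score ratio recovers the spectrum ratio
as all the standard deviations tend to infinity. -/
theorem score_ratio_recovers_spectrum_gaussian
    (d : ℕ)
    (FI : ℝ → ℝ) (hFIc : Continuous FI) (hFIb : ∃ C, ∀ t, |FI t| ≤ C)
    (hFIi : Integrable FI) (hFIsupp : Function.support FI ⊆ Set.Ico 0 (2 * π))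
    (FR : (Fin d → ℝ) → ℝ) (hFRc : Continuous FR) (hFRb : ∃ C, ∀ u, |FR u| ≤ C)
    (hFRi : Integrable FR) (hFRe : ∀ u, FR (-u) = FR u)
    (hFRpos : 0 < ∫ u, |FR u|)
    (f₀ : (Fin d → ℝ) → ℝ)
    (hf₀ : ∀ x, f₀ x = ∫ θ' in (0:ℝ)..(2 * π), ∫ w' : Fin d → ℝ,
        FI θ' * FR w' * Real.cos ((∑ i, w' i * x i) + θ'))
    (S : ℝ → (Fin d → ℝ) → (Fin d → ℝ) → ℝ)
    (hS : ∀ θ w σ, S θ w σ =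
      ∫ x : Fin d → ℝ, f₀ x * Real.cos ((∑ i, w i * x i) + θ)
        ∂(Measure.pi fun i => gaussianReal 0 ((σ i) ^ 2).toNNReal))
    (θ : ℝ) (hθ : θ ∈ Set.Ico 0 (2 * π)) (hcosθ : Real.cos θ ≠ 0)
    (hFIcos : (∫ t in (0:ℝ)..(2 * π), FI t * Real.cos t) ≠ 0)
    (hdom : ∃ G : (Fin d → ℝ) → ℝ, Integrable G ∧ ∃ T₀ > (0 : ℝ),
      ∀ σ : Fin d → ℝ, (∀ i, T₀ ≤ σ i) → ∀ u : Fin d → ℝ,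
        (∏ i, σ i / Real.sqrt (2 * π)) * |S θ u σ| ≤ G u) :
    ∀ w : Fin d → ℝ, ∀ ε > (0 : ℝ), ∃ T : ℝ,
      ∀ σ : Fin d → ℝ, (∀ i, 0 < σ i) → (∀ i, T < σ i) →
        |(|S θ w σ|) / (∫ u, |S θ u σ|) - |FR w| / (∫ u, |FR u|)| < ε := by
  intro w ε hε
  obtain rfl : f₀ = cosineSuperposition FI FR := funext hf₀
  obtain rfl : S = gaussianScore (cosineSuperposition FI FR) :=
    funext fun θ ↦ funext fun w ↦ funext fun σ ↦ hS θ w σ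
  have hlim := score_ratio_recovers_spectrum_gaussian_general hFRc.measurable hFRb hFRi hFRe
    hFRpos hFIcos hcosθ hFRc.continuousAt (w := w)
  obtain ⟨T, hT⟩ := exists_forall_lt_of_eventually_atTop (Metric.tendsto_nhds.1 hlim ε hε)
  exact ⟨T, fun σ _ hσ ↦ hT σ hσ⟩
end

section
/- Assume each component x_i ∼ Cauchy(0, σ_i), i.e., x_i has density t ↦ (σ_i/π)/(σ_i² + t²). Fix θ ∈ [0,2π) with cos θ ≠ 0, assume ∫_0^{2π} F_I(θ') cos θ' dθ' ≠ 0, and assume there exist an integrable G : ℝ^d → ℝ and Σ₀ > 0 such that (∏_{i=1}^d σ_i/2) · |S(θ, u; σ)| ≤ G(u) for all u ∈ ℝ^d whenever min_i σ_i ≥ Σ₀. Then for every w ∈ ℝ^d, |S(θ, w; σ)| / ∫_{ℝ^d} |S(θ, u; σ)| du → |F_R(w)| / ∫_{ℝ^d} |F_R(u)| du as min_i σ_i → ∞ (i.e., for every ε > 0 there exists Σ such that the ratio is within ε of the limit whenever min_i σ_i > Σ). -/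
open MeasureTheory Filter Real

/-!
For an even `F`, the addition formula gives `∫ F w * cos (w ⬝ᵥ x + θ) = cos θ * F̂ x`, where `F̂` is
the cosine transform. Hence `f₀` is a multiple of the cosine transform of `F_R`, and the score is a
multiple of the convolution of `F_R` with the cosine transform of the Cauchy density. By Fourier
inversion the latter is, up to a factor depending only on `σ`, the Laplace density with rates `σ`,
which concentrates at the origin as `min σ → ∞`. All prefactors cancel in the ratio, so it suffices
that `F_R ⋆ laplaceDensity σ` converges to `F_R` pointwise and that its `L¹` norm converges to that
of `F_R`. For the latter, Young's inequality bounds the norms from above, and Fatou's lemma bounds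
their lower limit from below.
-/

open scoped Convolution Topology ENNReal FourierTransform

section Fatou

theorem tendsto_lintegral_of_ae_tendsto_of_lintegral_le {α κ : Type*} [MeasurableSpace α]
    {μ : Measure α} {l : Filter κ} [l.IsCountablyGenerated] {f : κ → α → ℝ≥0∞} {g : α → ℝ≥0∞}
    (hf : ∀ n, AEMeasurable (f n) μ) (hlim : ∀ᵐ x ∂μ, Tendsto (fun n => f n x) l (𝓝 (g x)))
    (hle : ∀ᶠ n in l, ∫⁻ x, f n x ∂μ ≤ ∫⁻ x, g x ∂μ) :
    Tendsto (fun n => ∫⁻ x, f n x ∂μ) l (𝓝 (∫⁻ x, g x ∂μ)) := by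
  rcases l.eq_or_neBot with rfl | _
  · exact tendsto_bot
  refine tendsto_of_le_liminf_of_limsup_le ?_ (limsup_le_of_le (by isBoundedDefault) hle)
  calc ∫⁻ x, g x ∂μ = ∫⁻ x, liminf (fun n => f n x) l ∂μ :=
        lintegral_congr_ae (hlim.mono fun _ hx => hx.liminf_eq.symm)
    _ ≤ liminf (fun n => ∫⁻ x, f n x ∂μ) l := lintegral_liminf_le' hf

end Fatou

section Young

variable {𝕜 G E E' F : Type*} [NontriviallyNormedField 𝕜] [NormedAddCommGroup E] [NormedSpace 𝕜 E]
  [NormedAddCommGroup E'] [NormedSpace 𝕜 E'] [NormedAddCommGroup F] [NormedSpace 𝕜 F]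
  [NormedSpace ℝ F] [AddGroup G] [MeasurableSpace G] [MeasurableAdd₂ G] [MeasurableNeg G]
  {μ : Measure G} [SFinite μ] [μ.IsAddRightInvariant]

theorem lintegral_enorm_convolution_le (L : E →L[𝕜] E' →L[𝕜] F) {f : G → E} {g : G → E'}
    (hf : AEStronglyMeasurable f μ) (hg : AEStronglyMeasurable g μ) :
    ∫⁻ x, ‖(f ⋆[L, μ] g) x‖ₑ ∂μ ≤ ‖L‖ₑ * (∫⁻ x, ‖f x‖ₑ ∂μ) * ∫⁻ x, ‖g x‖ₑ ∂μ := by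
  have hshift (t : G) : AEMeasurable (fun x => ‖g (x - t)‖ₑ) μ :=
    (hg.comp_measurePreserving (measurePreserving_sub_right μ t)).enorm
  calc ∫⁻ x, ‖(f ⋆[L, μ] g) x‖ₑ ∂μ ≤ ∫⁻ x, ∫⁻ t, ‖L (f t) (g (x - t))‖ₑ ∂μ ∂μ :=
        lintegral_mono fun _ => enorm_integral_le_lintegral_enorm _
    _ = ∫⁻ t, ∫⁻ x, ‖L (f t) (g (x - t))‖ₑ ∂μ ∂μ :=
        lintegral_lintegral_swap (hf.convolution_integrand L hg).enorm
    _ ≤ ∫⁻ t, ∫⁻ x, ‖L‖ₑ * ‖f t‖ₑ * ‖g (x - t)‖ₑ ∂μ ∂μ :=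
        lintegral_mono fun t => lintegral_mono fun x =>
          ((L (f t)).le_opENorm _).trans (mul_le_mul_left (L.le_opENorm _) _)
    _ = ∫⁻ t, ‖L‖ₑ * ‖f t‖ₑ * ∫⁻ x, ‖g x‖ₑ ∂μ ∂μ := by
        congr 1 with t
        rw [lintegral_const_mul'' _ (hshift t), lintegral_sub_right_eq_self (‖g ·‖ₑ)]
    _ = ‖L‖ₑ * (∫⁻ x, ‖f x‖ₑ ∂μ) * ∫⁻ x, ‖g x‖ₑ ∂μ := by
        rw [lintegral_mul_const'' _ (by fun_prop), lintegral_const_mul'' _ (by fun_prop)]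

end Young

variable {ι : Type*} [Fintype ι]

section CosineTransform

/-- The cosine transform on `ℝ^ι`, with no normalizing factor and no `2π` in the phase; for even `f`
it is the whole Fourier transform. -/
noncomputable def cosTransform (f : (ι → ℝ) → ℝ) (x : ι → ℝ) : ℝ :=
  ∫ w, f w * cos (w ⬝ᵥ x)

variable {f g : (ι → ℝ) → ℝ}

theorem integrable_mul_cos_dotProduct (hf : Integrable f) (x : ι → ℝ) :
    Integrable fun w => f w * cos (w ⬝ᵥ x) :=
  hf.mul_bdd (c := 1) (Continuous.aestronglyMeasurable (by fun_prop))
    (ae_of_all _ fun _ => abs_cos_le_one _)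

theorem abs_mul_cos_le (a t : ℝ) : |a * cos t| ≤ |a| := by
  rw [abs_mul]
  exact mul_le_of_le_one_right (abs_nonneg a) (abs_cos_le_one t)

theorem abs_cosTransform_le (hf : Integrable f) (x : ι → ℝ) :
    |cosTransform f x| ≤ ∫ w, |f w| :=
  norm_integral_le_of_norm_le (f := fun w => f w * cos (w ⬝ᵥ x)) hf.abs
    (ae_of_all _ fun _ => abs_mul_cos_le _ _)

theorem continuous_cosTransform (hf : Integrable f) : Continuous (cosTransform f) :=
  continuous_of_dominated
    (fun x => (integrable_mul_cos_dotProduct hf x).aestronglyMeasurable)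
    (fun _ => ae_of_all _ fun _ => abs_mul_cos_le _ _) hf.abs
    (ae_of_all _ fun _ => by fun_prop)

theorem cosTransform_neg_right (f : (ι → ℝ) → ℝ) (x : ι → ℝ) :
    cosTransform f (-x) = cosTransform f x := by
  simp [cosTransform]

theorem integral_mul_sin_dotProduct_of_even (hf : Function.Even f) (x : ι → ℝ) :
    ∫ w, f w * sin (w ⬝ᵥ x) = 0 := by
  have hneg := integral_neg_eq_self (fun w : ι → ℝ => f w * sin (w ⬝ᵥ x)) volume
  simp only [hf _, neg_dotProduct, sin_neg, mul_neg, integral_neg] at hneg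
  linarith

theorem integral_mul_cos_dotProduct_add_of_even (hf : Function.Even f) (hfi : Integrable f)
    (x : ι → ℝ) (θ : ℝ) : ∫ w, f w * cos (w ⬝ᵥ x + θ) = cos θ * cosTransform f x := by
  have hcos := integrable_mul_cos_dotProduct hfi x
  have hsin : Integrable fun w => f w * sin (w ⬝ᵥ x) :=
    hfi.mul_bdd (c := 1) (Continuous.aestronglyMeasurable (by fun_prop))
      (ae_of_all _ fun _ => abs_sin_le_one _)
  calc ∫ w, f w * cos (w ⬝ᵥ x + θ)
      = ∫ w, cos θ * (f w * cos (w ⬝ᵥ x)) - sin θ * (f w * sin (w ⬝ᵥ x)) := by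
        congr 1 with w
        rw [cos_add]
        ring
    _ = cos θ * cosTransform f x := by
        rw [integral_sub (hcos.const_mul _) (hsin.const_mul _), integral_const_mul,
          integral_const_mul, integral_mul_sin_dotProduct_of_even hf, mul_zero, sub_zero,
          cosTransform]

theorem cosTransform_mul_cosTransform (hf : Function.Even f) (hfi : Integrable f)
    (hgi : Integrable g) (w : ι → ℝ) :
    cosTransform (fun x => g x * cosTransform f x) w = (f ⋆ cosTransform g) w := by
  have hint : Integrable (Function.uncurry fun x v : ι → ℝ => g x * (f v * cos (x ⬝ᵥ (v - w))))
      (volume.prod volume) :=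
    ((hgi.mul_prod hfi).mul_bdd (c := 1) (g := fun p : (ι → ℝ) × (ι → ℝ) => cos (p.1 ⬝ᵥ (p.2 - w)))
      (Continuous.aestronglyMeasurable (by fun_prop))
      (ae_of_all _ fun _ => abs_cos_le_one _)).congr (ae_of_all _ fun _ => mul_assoc _ _ _)
  calc ∫ x, g x * cosTransform f x * cos (x ⬝ᵥ w)
      = ∫ x, ∫ v, g x * (f v * cos (x ⬝ᵥ (v - w))) := by
        congr 1 with x
        rw [integral_const_mul, mul_assoc, mul_comm (cosTransform f x), ← cos_neg (x ⬝ᵥ w),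
          ← integral_mul_cos_dotProduct_add_of_even hf hfi]
        simp only [dotProduct_comm x, sub_eq_add_neg, add_dotProduct, neg_dotProduct]
    _ = ∫ v, ∫ x, g x * (f v * cos (x ⬝ᵥ (v - w))) := integral_integral_swap hint
    _ = ∫ v, f v * cosTransform g (w - v) := by
        congr 1 with v
        rw [← neg_sub v w, cosTransform_neg_right, cosTransform, ← integral_const_mul]
        simp only [mul_left_comm]
    _ = (f ⋆ cosTransform g) w := rfl

theorem integral_mul_cosTransform_mul_cos_dotProduct_add_of_even (hf : Function.Even f)
    (hfi : Integrable f) (hg : Function.Even g) (hgi : Integrable g) (w : ι → ℝ) (θ : ℝ) :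
    ∫ x, g x * (cosTransform f x * cos (w ⬝ᵥ x + θ)) = cos θ * (f ⋆ cosTransform g) w := by
  have heven : Function.Even fun x => g x * cosTransform f x := fun x => by
    simp only [hg x, cosTransform_neg_right]
  have hint : Integrable fun x => g x * cosTransform f x :=
    hgi.mul_bdd (continuous_cosTransform hfi).aestronglyMeasurable
      (ae_of_all _ (abs_cosTransform_le hfi))
  rw [← cosTransform_mul_cosTransform hf hfi hgi,
    ← integral_mul_cos_dotProduct_add_of_even heven hint]
  simp only [dotProduct_comm w, mul_assoc]

theorem cosTransform_prod {p : ι → ℝ → ℝ} (hp : ∀ i, Integrable (p i)) (w : ι → ℝ) :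
    cosTransform (fun x => ∏ i, p i (x i)) w =
      (∏ i, ∫ t, (p i t : ℂ) * Complex.exp (w i * t * Complex.I)).re := by
  have hint : Integrable fun x : ι → ℝ =>
      ((∏ i, p i (x i) : ℝ) : ℂ) * Complex.exp ((x ⬝ᵥ w : ℝ) * Complex.I) :=
    (Integrable.fintype_prod hp).ofReal.mul_bdd (c := 1)
      (Continuous.aestronglyMeasurable (by fun_prop))
      (ae_of_all _ fun x => (Complex.norm_exp_ofReal_mul_I _).le)
  calc cosTransform (fun x => ∏ i, p i (x i)) w
      = ∫ x : ι → ℝ,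
          (((∏ i, p i (x i) : ℝ) : ℂ) * Complex.exp ((x ⬝ᵥ w : ℝ) * Complex.I)).re := by
        simp only [cosTransform, Complex.re_ofReal_mul, Complex.exp_ofReal_mul_I_re]
    _ = (∫ x : ι → ℝ,
          ((∏ i, p i (x i) : ℝ) : ℂ) * Complex.exp ((x ⬝ᵥ w : ℝ) * Complex.I)).re :=
        integral_re hint
    _ = (∫ x : ι → ℝ, ∏ i, (p i (x i) : ℂ) * Complex.exp (w i * x i * Complex.I)).re := by
        simp only [Finset.prod_mul_distrib, ← Complex.exp_sum, ← Finset.sum_mul,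
          dotProduct, Complex.ofReal_prod, Complex.ofReal_sum, Complex.ofReal_mul,
          mul_comm (w _ : ℂ)]
    _ = _ := by
        rw [integral_fintype_prod_volume_eq_prod
          (fun i (t : ℝ) => (p i t : ℂ) * Complex.exp (w i * t * Complex.I))]

end CosineTransform

section OneDimensional

variable {c : ℝ}

theorem integrable_exp_neg_mul_abs (hc : 0 < c) : Integrable fun t : ℝ => exp (-(c * |t|)) := by
  have hneg : IntegrableOn (fun t : ℝ => exp (-(c * |t|))) (Set.Iic 0) :=
    (integrableOn_exp_mul_Iic hc 0).congr_fun (fun t ht => by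
      simp only [abs_of_nonpos (Set.mem_Iic.1 ht), mul_neg, neg_neg]) measurableSet_Iic
  have hpos : IntegrableOn (fun t : ℝ => exp (-(c * |t|))) (Set.Ioi 0) :=
    (integrableOn_exp_mul_Ioi (neg_lt_zero.2 hc) 0).congr_fun (fun t ht => by
      simp only [abs_of_pos (Set.mem_Ioi.1 ht), neg_mul]) measurableSet_Ioi
  rw [← integrableOn_univ, ← Set.Iic_union_Ioi (a := (0 : ℝ))]
  exact hneg.union hpos

theorem integral_exp_neg_mul_abs_mul_cexp (hc : 0 < c) (ξ : ℝ) :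
    ∫ t : ℝ, (exp (-(c * |t|)) : ℂ) * Complex.exp (ξ * t * Complex.I) =
      (2 * c / (c ^ 2 + ξ ^ 2) : ℝ) := by
  have hre₁ : (-c + ξ * Complex.I : ℂ).re < 0 := by simpa using hc
  have hre₂ : 0 < (c + ξ * Complex.I : ℂ).re := by simpa using hc
  have hpos : Set.EqOn (fun t : ℝ => (exp (-(c * |t|)) : ℂ) * Complex.exp (ξ * t * Complex.I))
      (fun t : ℝ => Complex.exp ((-c + ξ * Complex.I) * t)) (Set.Ioi 0) := fun t ht => by
    simp only [abs_of_pos (Set.mem_Ioi.1 ht), Complex.ofReal_exp, ← Complex.exp_add]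
    push_cast
    ring_nf
  have hneg : Set.EqOn (fun t : ℝ => (exp (-(c * |t|)) : ℂ) * Complex.exp (ξ * t * Complex.I))
      (fun t : ℝ => Complex.exp ((c + ξ * Complex.I) * t)) (Set.Iic 0) := fun t ht => by
    simp only [abs_of_nonpos (Set.mem_Iic.1 ht), Complex.ofReal_exp, ← Complex.exp_add]
    push_cast
    ring_nf
  have hne₁ : (-c + ξ * Complex.I : ℂ) ≠ 0 := fun h => by simp [h] at hre₁
  have hne₂ : (c + ξ * Complex.I : ℂ) ≠ 0 := fun h => by simp [h] at hre₂
  have hfactor : (c ^ 2 + ξ ^ 2 : ℂ) = -((-c + ξ * Complex.I) * (c + ξ * Complex.I)) := by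
    linear_combination (ξ : ℂ) ^ 2 * Complex.I_sq
  rw [← intervalIntegral.integral_Iic_add_Ioi
      ((integrableOn_exp_mul_complex_Iic hre₂ 0).congr_fun hneg.symm measurableSet_Iic)
      ((integrableOn_exp_mul_complex_Ioi hre₁ 0).congr_fun hpos.symm measurableSet_Ioi),
    setIntegral_congr_fun measurableSet_Ioi hpos, setIntegral_congr_fun measurableSet_Iic hneg,
    integral_exp_mul_complex_Ioi hre₁, integral_exp_mul_complex_Iic hre₂]
  push_cast
  rw [hfactor]
  simp only [mul_zero, Complex.exp_zero]
  field_simp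
  ring

theorem integral_exp_neg_mul_abs (hc : 0 < c) : ∫ t : ℝ, exp (-(c * |t|)) = 2 / c := by
  have hhalf := integral_exp_mul_Ioi (neg_lt_zero.2 hc) 0
  simp only [neg_mul, mul_zero, exp_zero, neg_div_neg_eq] at hhalf
  rw [integral_comp_abs (f := fun t => exp (-(c * t))), hhalf, mul_one_div]

theorem integrable_cauchy (hc : 0 < c) : Integrable fun t : ℝ => c / π / (c ^ 2 + t ^ 2) := by
  refine (ProbabilityTheory.integrable_cauchyPDFReal 0 (γ := c.toNNReal)).congr
    (ae_of_all _ fun t => ?_)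
  rw [ProbabilityTheory.cauchyPDFReal_def, coe_toNNReal c hc.le, sub_zero, add_comm]
  field

theorem fourier_exp_neg_mul_abs (hc : 0 < c) :
    𝓕 (fun t : ℝ => (exp (-(2 * π * c * |t|)) : ℂ)) =
      fun ξ : ℝ => ((c / π / (c ^ 2 + ξ ^ 2) : ℝ) : ℂ) := by
  ext ξ
  have hrate : 0 < 2 * π * c := by positivity
  calc 𝓕 (fun t : ℝ => (exp (-(2 * π * c * |t|)) : ℂ)) ξ
      = ∫ t : ℝ, (exp (-(2 * π * c * |t|)) : ℂ) *
          Complex.exp ((-2 * π * ξ : ℝ) * t * Complex.I) := by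
        rw [fourier_real_eq_integral_exp_smul]
        congr 1 with t
        rw [smul_eq_mul, mul_comm]
        congr 2
        push_cast
        ring
    _ = ((c / π / (c ^ 2 + ξ ^ 2) : ℝ) : ℂ) := by
        rw [integral_exp_neg_mul_abs_mul_cexp hrate]
        congr 1
        field_simp

theorem integral_cauchy_mul_cexp (hc : 0 < c) (ξ : ℝ) :
    ∫ t : ℝ, ((c / π / (c ^ 2 + t ^ 2) : ℝ) : ℂ) * Complex.exp (ξ * t * Complex.I) =
      (exp (-(c * |ξ|)) : ℝ) := by
  have hcont : Continuous fun t : ℝ => (exp (-(2 * π * c * |t|)) : ℂ) := by fun_prop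
  have hint : Integrable fun t : ℝ => (exp (-(2 * π * c * |t|)) : ℂ) :=
    (integrable_exp_neg_mul_abs (by positivity)).ofReal
  have hfourier : Integrable (𝓕 fun t : ℝ => (exp (-(2 * π * c * |t|)) : ℂ)) := by
    rw [fourier_exp_neg_mul_abs hc]
    exact (integrable_cauchy hc).ofReal
  have hinv := congrFun (hcont.fourierInv_fourier_eq hint hfourier) (ξ / (2 * π))
  rw [fourier_exp_neg_mul_abs hc, fourierInv_eq'] at hinv
  convert hinv using 1
  · congr 1 with t
    rw [smul_eq_mul, mul_comm]
    congr 2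
    simp only [RCLike.inner_apply, ringHom_apply, Complex.ofReal_mul, Complex.ofReal_ofNat,
      Complex.ofReal_div, mul_eq_mul_right_iff, Complex.I_ne_zero, or_false]
    field
  · rw [abs_div, abs_of_pos two_pi_pos]
    congr 3
    field

end OneDimensional

section Densities

/-- The Lebesgue density of the input vector of the score: its components are independent, the
`i`-th one being `Cauchy(0, σ i)`. A density only when all `σ i` are positive. -/
noncomputable def cauchyDensity (σ x : ι → ℝ) : ℝ :=
  ∏ i, σ i / π / (σ i ^ 2 + x i ^ 2)

/-- The approximate identity hidden in the score: the Lebesgue density of a vector with independent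
components, the `i`-th one being Laplace with mean `0` and rate `σ i` (that is, scale `1 / σ i`).
A density only when all `σ i` are positive. -/
noncomputable def laplaceDensity (σ v : ι → ℝ) : ℝ :=
  ∏ i, σ i / 2 * exp (-(σ i * |v i|))

variable {σ : ι → ℝ}

theorem even_cauchyDensity (σ : ι → ℝ) : Function.Even (cauchyDensity σ) := fun x => by
  simp [cauchyDensity]

theorem integrable_cauchyDensity (hσ : ∀ i, 0 < σ i) : Integrable (cauchyDensity σ) :=
  Integrable.fintype_prod fun i => integrable_cauchy (hσ i)

theorem cosTransform_cauchyDensity (hσ : ∀ i, 0 < σ i) :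
    cosTransform (cauchyDensity σ) = (∏ i, σ i / 2)⁻¹ • laplaceDensity σ := by
  have hprod : ∏ i, σ i / 2 ≠ 0 := Finset.prod_ne_zero_iff.2 fun i _ => (half_pos (hσ i)).ne'
  ext w
  unfold cauchyDensity
  rw [cosTransform_prod fun i => integrable_cauchy (hσ i)]
  simp only [integral_cauchy_mul_cexp (hσ _), ← Complex.ofReal_prod, Complex.ofReal_re,
    Pi.smul_apply, laplaceDensity, Finset.prod_mul_distrib, smul_eq_mul]
  rw [inv_mul_cancel_left₀ hprod]

theorem continuous_laplaceDensity (σ : ι → ℝ) : Continuous (laplaceDensity σ) := by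
  unfold laplaceDensity
  fun_prop

theorem laplaceDensity_nonneg (hσ : ∀ i, 0 < σ i) (v : ι → ℝ) : 0 ≤ laplaceDensity σ v :=
  Finset.prod_nonneg fun i _ => mul_nonneg (half_pos (hσ i)).le (exp_nonneg _)

theorem integrable_laplaceDensity (hσ : ∀ i, 0 < σ i) : Integrable (laplaceDensity σ) :=
  Integrable.fintype_prod (f := fun i t => σ i / 2 * exp (-(σ i * |t|)))
    fun i => (integrable_exp_neg_mul_abs (hσ i)).const_mul _

theorem integral_laplaceDensity (hσ : ∀ i, 0 < σ i) : ∫ v, laplaceDensity σ v = 1 := by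
  unfold laplaceDensity
  rw [integral_fintype_prod_volume_eq_prod fun i t => σ i / 2 * exp (-(σ i * |t|))]
  refine Finset.prod_eq_one fun i _ => ?_
  have := (hσ i).ne'
  rw [integral_const_mul, integral_exp_neg_mul_abs (hσ i)]
  field

theorem laplaceDensity_eq_prod_mul (hσ : ∀ i, 0 < σ i) (v : ι → ℝ) :
    laplaceDensity σ v = (∏ i, σ i) * laplaceDensity 1 (σ * v) := by
  simp only [laplaceDensity, ← Finset.prod_mul_distrib, Pi.one_apply, Pi.mul_apply, abs_mul,
    abs_of_pos (hσ _), one_mul]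
  exact Finset.prod_congr rfl fun i _ => by ring

theorem lintegral_enorm_convolution_laplaceDensity_le {f : (ι → ℝ) → ℝ}
    (hf : AEStronglyMeasurable f) (hσ : ∀ i, 0 < σ i) :
    ∫⁻ w, ‖(f ⋆ laplaceDensity σ) w‖ₑ ≤ ∫⁻ w, ‖f w‖ₑ := by
  have hmass : ∫⁻ v, ‖laplaceDensity σ v‖ₑ = 1 := by
    rw [← ofReal_integral_norm_eq_lintegral_enorm (integrable_laplaceDensity hσ)]
    simp only [norm_of_nonneg (laplaceDensity_nonneg hσ _), integral_laplaceDensity hσ,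
      ENNReal.ofReal_one]
  calc ∫⁻ w, ‖(f ⋆ laplaceDensity σ) w‖ₑ
      ≤ ‖ContinuousLinearMap.lsmul ℝ ℝ (E := ℝ)‖ₑ * (∫⁻ w, ‖f w‖ₑ) * ∫⁻ v, ‖laplaceDensity σ v‖ₑ :=
        lintegral_enorm_convolution_le _ hf (continuous_laplaceDensity σ).aestronglyMeasurable
    _ = ∫⁻ w, ‖f w‖ₑ := by
        rw [hmass, ← ofReal_norm, ContinuousLinearMap.opNorm_lsmul, ENNReal.ofReal_one, one_mul,
          mul_one]

end Densities

section ApproximateIdentity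

theorem integral_comp_mul_pi {E : Type*} [NormedAddCommGroup E] [NormedSpace ℝ E] {σ : ι → ℝ}
    (hσ : ∀ i, σ i ≠ 0) (h : (ι → ℝ) → E) :
    ∫ v, h (σ * v) = |∏ i, σ i|⁻¹ • ∫ v, h v := by
  classical
  have hmap : Measure.map (σ * ·) volume = ENNReal.ofReal |(∏ i, σ i)⁻¹| • volume := by
    have hdet : (Matrix.diagonal σ).det ≠ 0 := by
      rw [Matrix.det_diagonal]
      exact Finset.prod_ne_zero_iff.2 fun i _ => hσ i
    have hdiag : ⇑(Matrix.toLin' (Matrix.diagonal σ)) = (σ * ·) := by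
      ext v i
      simp [Matrix.mulVec_diagonal]
    rw [← Matrix.det_diagonal, ← map_matrix_volume_pi_eq_smul_volume_pi hdet, hdiag]
  have hemb : MeasurableEmbedding (σ * · : (ι → ℝ) → ι → ℝ) :=
    (Homeomorph.piCongrRight fun i => Homeomorph.mulLeft₀ (σ i) (hσ i)).measurableEmbedding
  rw [← hemb.integral_map, hmap, integral_smul_measure, ENNReal.toReal_ofReal (abs_nonneg _),
    abs_inv]

theorem tendsto_integral_comp_sub_div_mul {f k : (ι → ℝ) → ℝ} (hf : Continuous f)
    (hfb : ∃ C, ∀ u, |f u| ≤ C) (hk : Integrable k) (w : ι → ℝ) :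
    Tendsto (fun σ : ι → ℝ => ∫ v, f (w - v / σ) * k v) (Filter.pi fun _ => atTop)
      (𝓝 (f w * ∫ v, k v)) := by
  obtain ⟨C, hC⟩ := hfb
  rw [← integral_const_mul]
  refine tendsto_integral_filter_of_dominated_convergence (fun v => C * ‖k v‖)
    (.of_forall fun σ => ?_) (.of_forall fun σ => ae_of_all _ fun v => ?_) (hk.norm.const_mul C)
    (ae_of_all _ fun v => ?_)
  · have hcont : Continuous fun v => f (w - v / σ) := by fun_prop
    exact hcont.aestronglyMeasurable.mul hk.aestronglyMeasurable
  · rw [norm_mul]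
    gcongr
    exact hC _
  · have hshift : Tendsto (fun σ : ι → ℝ => v / σ) (Filter.pi fun _ => atTop) (𝓝 0) :=
      tendsto_pi_nhds.2 fun i => tendsto_const_nhds.div_atTop (tendsto_eval_pi _ i)
    have harg : Tendsto (fun σ : ι → ℝ => w - v / σ) (Filter.pi fun _ => atTop) (𝓝 w) := by
      simpa using tendsto_const_nhds.sub hshift
    exact ((hf.tendsto w).comp harg).mul_const _

theorem convolution_laplaceDensity_apply {σ : ι → ℝ} (hσ : ∀ i, 0 < σ i) (f : (ι → ℝ) → ℝ)
    (w : ι → ℝ) :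
    (f ⋆ laplaceDensity σ) w = ∫ v, f (w - v / σ) * laplaceDensity 1 v := by
  have hprod : 0 < ∏ i, σ i := Finset.prod_pos fun i _ => hσ i
  have hcancel (v : ι → ℝ) : σ * v / σ = v :=
    funext fun i => mul_div_cancel_left₀ (v i) (hσ i).ne'
  calc (f ⋆ laplaceDensity σ) w = ∫ v, f (w - v) * laplaceDensity σ v := convolution_lsmul_swap
    _ = (∏ i, σ i) * ∫ v, f (w - σ * v / σ) * laplaceDensity 1 (σ * v) := by
        simp only [← integral_const_mul, laplaceDensity_eq_prod_mul hσ, hcancel, mul_left_comm]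
    _ = ∫ v, f (w - v / σ) * laplaceDensity 1 v := by
        rw [integral_comp_mul_pi (fun i => (hσ i).ne')
          fun y => f (w - y / σ) * laplaceDensity 1 y, abs_of_pos hprod, smul_eq_mul,
          mul_inv_cancel_left₀ hprod.ne']

theorem eventually_pi_atTop_forall_pos {κ : Type*} [Finite κ] :
    ∀ᶠ σ : κ → ℝ in Filter.pi fun _ => atTop, ∀ i, 0 < σ i :=
  eventually_all.2 fun i => (tendsto_eval_pi _ i).eventually (eventually_gt_atTop 0)

theorem exists_forall_lt_of_eventually_pi_atTop {κ : Type*} [Finite κ] {p : (κ → ℝ) → Prop}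
    (hp : ∀ᶠ σ in Filter.pi fun _ => atTop, p σ) : ∃ T, ∀ σ, (∀ i, T < σ i) → p σ := by
  have hle : (atTop : Filter (κ → ℝ)) ≤ Filter.pi fun _ => atTop :=
    le_pi.2 fun i => tendsto_atTop.2 fun b =>
      (eventually_ge_atTop fun _ => b).mono fun _ hσ => hσ i
  obtain ⟨σ₀, hσ₀⟩ := eventually_atTop.1 (hle hp)
  obtain ⟨T, hT⟩ := Finite.exists_le σ₀
  exact ⟨T, fun σ hσ => hσ₀ σ fun i => (hT i).trans (hσ i).le⟩

variable {f : (ι → ℝ) → ℝ}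

theorem tendsto_convolution_laplaceDensity (hf : Continuous f) (hfb : ∃ C, ∀ u, |f u| ≤ C)
    (w : ι → ℝ) :
    Tendsto (fun σ => (f ⋆ laplaceDensity σ) w) (Filter.pi fun _ => atTop) (𝓝 (f w)) := by
  have hone : ∀ i : ι, (0 : ℝ) < (1 : ι → ℝ) i := fun _ => one_pos
  have hlim := tendsto_integral_comp_sub_div_mul hf hfb (integrable_laplaceDensity hone) w
  rw [integral_laplaceDensity hone, mul_one] at hlim
  exact hlim.congr' (eventually_pi_atTop_forall_pos.mono fun σ hσ =>
    (convolution_laplaceDensity_apply hσ f w).symm)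

theorem tendsto_integral_abs_convolution_laplaceDensity (hf : Continuous f)
    (hfb : ∃ C, ∀ u, |f u| ≤ C) (hfi : Integrable f) :
    Tendsto (fun σ => ∫ w, |(f ⋆ laplaceDensity σ) w|) (Filter.pi fun _ => atTop)
      (𝓝 (∫ w, |f w|)) := by
  have hmeas : ∀ σ, AEStronglyMeasurable (f ⋆ laplaceDensity σ) := fun σ =>
    (hf.aestronglyMeasurable.convolution_integrand (ContinuousLinearMap.lsmul ℝ ℝ)
      (continuous_laplaceDensity σ).aestronglyMeasurable).integral_prod_right'
  have hlim : Tendsto (fun σ => ∫⁻ w, ‖(f ⋆ laplaceDensity σ) w‖ₑ) (Filter.pi fun _ => atTop)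
      (𝓝 (∫⁻ w, ‖f w‖ₑ)) :=
    tendsto_lintegral_of_ae_tendsto_of_lintegral_le (fun σ => (hmeas σ).enorm)
      (ae_of_all _ fun w => (tendsto_convolution_laplaceDensity hf hfb w).enorm)
      (eventually_pi_atTop_forall_pos.mono fun σ hσ =>
        lintegral_enorm_convolution_laplaceDensity_le hf.aestronglyMeasurable hσ)
  simp only [← norm_eq_abs, integral_norm_eq_lintegral_enorm (hmeas _),
    integral_norm_eq_lintegral_enorm hf.aestronglyMeasurable]
  exact (ENNReal.tendsto_toReal hfi.2.ne).comp hlim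

end ApproximateIdentity

section Score

theorem integral_cauchyDensity_mul_cosTransform_mul_cos {F : (ι → ℝ) → ℝ} (hF : Function.Even F)
    (hFi : Integrable F) {σ : ι → ℝ} (hσ : ∀ i, 0 < σ i) (w : ι → ℝ) (θ : ℝ) :
    ∫ x, cauchyDensity σ x * (cosTransform F x * cos (w ⬝ᵥ x + θ)) =
      cos θ * (∏ i, σ i / 2)⁻¹ * (F ⋆ laplaceDensity σ) w := by
  rw [integral_mul_cosTransform_mul_cos_dotProduct_add_of_even hF hFi (even_cauchyDensity σ)
    (integrable_cauchyDensity hσ), cosTransform_cauchyDensity hσ, convolution_smul, Pi.smul_apply,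
    smul_eq_mul, mul_assoc]

theorem intervalIntegral_integral_mul_cos_dotProduct_add_of_even {F : (ι → ℝ) → ℝ}
    (hF : Function.Even F) (hFi : Integrable F) (φ : ℝ → ℝ) (a b : ℝ) (x : ι → ℝ) :
    ∫ θ in a..b, ∫ w, φ θ * F w * cos (w ⬝ᵥ x + θ) =
      (∫ θ in a..b, φ θ * cos θ) * cosTransform F x := by
  simp only [mul_assoc, integral_const_mul, integral_mul_cos_dotProduct_add_of_even hF hFi,
    ← intervalIntegral.integral_mul_const]

theorem score_ratio_recovers_spectrum_cauchy_general
    (FI : ℝ → ℝ)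
    (FR : (ι → ℝ) → ℝ) (hFRc : Continuous FR) (hFRb : ∃ C, ∀ u, |FR u| ≤ C)
    (hFRi : Integrable FR) (hFRe : Function.Even FR) (hFRpos : 0 < ∫ u, |FR u|)
    (f₀ : (ι → ℝ) → ℝ)
    (hf₀ : ∀ x, f₀ x = ∫ θ' in (0 : ℝ)..(2 * π), ∫ w', FI θ' * FR w' * cos (w' ⬝ᵥ x + θ'))
    (S : ℝ → (ι → ℝ) → (ι → ℝ) → ℝ)
    (hS : ∀ θ w σ, S θ w σ = ∫ x, cauchyDensity σ x * (f₀ x * cos (w ⬝ᵥ x + θ)))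
    (θ : ℝ) (hcosθ : cos θ ≠ 0) (hFIcos : (∫ t in (0 : ℝ)..(2 * π), FI t * cos t) ≠ 0)
    (w : ι → ℝ) :
    Tendsto (fun σ => |S θ w σ| / ∫ u, |S θ u σ|) (Filter.pi fun _ => atTop)
      (𝓝 (|FR w| / ∫ u, |FR u|)) := by
  set a := ∫ t in (0 : ℝ)..(2 * π), FI t * cos t
  have hscore : ∀ σ : ι → ℝ, (∀ i, 0 < σ i) → ∀ u,
      S θ u σ = a * (cos θ * (∏ i, σ i / 2)⁻¹) * (FR ⋆ laplaceDensity σ) u := fun σ hσ u => by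
    simp only [hS, hf₀, intervalIntegral_integral_mul_cos_dotProduct_add_of_even hFRe hFRi]
    rw [mul_assoc, ← integral_cauchyDensity_mul_cosTransform_mul_cos hFRe hFRi hσ,
      ← integral_const_mul]
    congr 1 with x
    ring
  have hlim := (tendsto_convolution_laplaceDensity hFRc hFRb w).abs.div
    (tendsto_integral_abs_convolution_laplaceDensity hFRc hFRb hFRi) hFRpos.ne'
  refine hlim.congr' (eventually_pi_atTop_forall_pos.mono fun σ hσ => ?_)
  have hprod : ∏ i, σ i / 2 ≠ 0 := Finset.prod_ne_zero_iff.2 fun i _ => (half_pos (hσ i)).ne'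
  have hcoef : |a * (cos θ * (∏ i, σ i / 2)⁻¹)| ≠ 0 :=
    abs_ne_zero.2 (mul_ne_zero hFIcos (mul_ne_zero hcosθ (inv_ne_zero hprod)))
  simp only [Pi.div_apply, hscore σ hσ, abs_mul _ ((FR ⋆ laplaceDensity σ) _), integral_const_mul,
    mul_div_mul_left _ _ hcoef]

end Score

/-- Cauchy inputs — the normalized score ratio recovers the spectrum ratio
as all the scale parameters tend to infinity. -/
theorem score_ratio_recovers_spectrum_cauchy
    (d : ℕ)
    (FI : ℝ → ℝ) (hFIc : Continuous FI) (hFIb : ∃ C, ∀ t, |FI t| ≤ C)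
    (hFIi : Integrable FI) (hFIsupp : Function.support FI ⊆ Set.Ico 0 (2 * π))
    (FR : (Fin d → ℝ) → ℝ) (hFRc : Continuous FR) (hFRb : ∃ C, ∀ u, |FR u| ≤ C)
    (hFRi : Integrable FR) (hFRe : ∀ u, FR (-u) = FR u)
    (hFRpos : 0 < ∫ u, |FR u|)
    (f₀ : (Fin d → ℝ) → ℝ)
    (hf₀ : ∀ x, f₀ x = ∫ θ' in (0:ℝ)..(2 * π), ∫ w' : Fin d → ℝ,
        FI θ' * FR w' * Real.cos ((∑ i, w' i * x i) + θ'))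
    (S : ℝ → (Fin d → ℝ) → (Fin d → ℝ) → ℝ)
    -- expectation over x with independent components, x_i ∼ Cauchy(0, σ_i), written
    -- via the product density ∏ i, (σ_i/π)/(σ_i² + x_i²) with respect to Lebesgue measure
    (hS : ∀ θ w σ, S θ w σ =
      ∫ x : Fin d → ℝ,
        (∏ i, (σ i / π) / ((σ i) ^ 2 + (x i) ^ 2)) *
          (f₀ x * Real.cos ((∑ i, w i * x i) + θ)))
    (θ : ℝ) (hθ : θ ∈ Set.Ico 0 (2 * π)) (hcosθ : Real.cos θ ≠ 0)
    (hFIcos : (∫ t in (0:ℝ)..(2 * π), FI t * Real.cos t) ≠ 0)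
    (hdom : ∃ G : (Fin d → ℝ) → ℝ, Integrable G ∧ ∃ T₀ > (0 : ℝ),
      ∀ σ : Fin d → ℝ, (∀ i, T₀ ≤ σ i) → ∀ u : Fin d → ℝ,
        (∏ i, σ i / 2) * |S θ u σ| ≤ G u) :
    ∀ w : Fin d → ℝ, ∀ ε > (0 : ℝ), ∃ T : ℝ,
      ∀ σ : Fin d → ℝ, (∀ i, 0 < σ i) → (∀ i, T < σ i) →
        |(|S θ w σ|) / (∫ u, |S θ u σ|) - |FR w| / (∫ u, |FR u|)| < ε := by
  intro w ε hε
  obtain ⟨T, hT⟩ := exists_forall_lt_of_eventually_pi_atTop (Metric.tendsto_nhds.1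
    (score_ratio_recovers_spectrum_cauchy_general FI FR hFRc hFRb hFRi hFRe hFRpos f₀ hf₀ S hS θ
      hcosθ hFIcos w) ε hε)
  exact ⟨T, fun σ _ => hT σ⟩
end

section
/- Fix ω_I ∈ ℝ^q and assume there exist a Lebesgue-integrable G : ℝ^k → ℝ and λ₀ > 0 such that |S(ω_I, u; λ)| / c(λ) ≤ G(u) for all u ∈ ℝ^k and all λ ≥ λ₀. Then ∫_{ℝ^k} |S(ω_I, u; λ)| / c(λ) du converges, as λ → ∞, to | ∫_{ℝ^q} F_I(ω_I') ( H_I(ω_I, ω_I') + H_I(ω_I, −ω_I') ) dν_I(ω_I') | · ∫_{ℝ^k} |F_R(u)| du. -/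
open MeasureTheory Filter Real

/-!
By Fubini, the score of `f₀ = ∫ F φ` at `ω` is the integral of `F` against the correlation
`E[φ(·, ω) φ(·, ω')]`. The orthogonality condition splits this correlation into two products, and
since `F_R` is even, the reflected one contributes the same convolution `F_R * H_R(·; λ)` as the
direct one. Hence `S(ω_I, ·; λ)` is a constant multiple of `F_R * H_R(·; λ)`, which after division
by `c(λ)` tends pointwise to that multiple of `F_R`; dominated convergence passes to the integral.
-/

section Features

variable {X Ω : Type*}

/-- The function `x ↦ ∫ F(ω) φ(x, ω) dρ(ω)` synthesized from the features `φ(·, ω)` with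
coefficients `F`; the target `f₀` is of this form. -/
noncomputable def featureSynthesis [MeasurableSpace Ω] (ρ : Measure Ω) (F : Ω → ℝ)
    (φ : X → Ω → ℝ) (x : X) : ℝ :=
  ∫ ω, F ω * φ x ω ∂ρ

/-- The score of the parameter `ω` for the target `f`: the correlation of `f` with the feature
`φ(·, ω)` when the data are distributed according to `μ`. -/
noncomputable def featureScore [MeasurableSpace X] (μ : Measure X) (φ : X → Ω → ℝ)
    (f : X → ℝ) (ω : Ω) : ℝ :=
  ∫ x, f x * φ x ω ∂μ

/-- The correlation under `μ` of the features with parameters `ω` and `ω'`; it is the kernel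
taking coefficients to scores. -/
noncomputable def featureCorrelation [MeasurableSpace X] (μ : Measure X) (φ : X → Ω → ℝ)
    (ω ω' : Ω) : ℝ :=
  ∫ x, φ x ω * φ x ω' ∂μ

variable [MeasurableSpace X] [MeasurableSpace Ω] {φ : X → Ω → ℝ}

theorem stronglyMeasurable_featureSynthesis {ρ : Measure Ω} [SFinite ρ] {F : Ω → ℝ}
    (hF : AEStronglyMeasurable F ρ) (hφ : Measurable (Function.uncurry φ)) :
    StronglyMeasurable (featureSynthesis ρ F φ) := by
  have hmk : featureSynthesis ρ F φ = featureSynthesis ρ (hF.mk F) φ := by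
    funext x
    exact integral_congr_ae (hF.ae_eq_mk.mul (ae_eq_refl (φ x)))
  rw [hmk]
  exact ((hF.stronglyMeasurable_mk.comp_measurable measurable_snd).mul
    hφ.stronglyMeasurable).integral_prod_right

theorem stronglyMeasurable_featureScore {μ : Measure X} [SFinite μ] {f : X → ℝ}
    (hf : AEStronglyMeasurable f μ) (hφ : Measurable (Function.uncurry φ)) :
    StronglyMeasurable (featureScore μ φ f) :=
  stronglyMeasurable_featureSynthesis (φ := fun ω x => φ x ω) hf (hφ.comp measurable_swap)

theorem featureScore_featureSynthesis {μ : Measure X} [IsFiniteMeasure μ] {ρ : Measure Ω}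
    [SFinite ρ] {F : Ω → ℝ} (hF : Integrable F ρ) (hφ : Measurable (Function.uncurry φ))
    {B : ℝ} (hφB : ∀ x ω, |φ x ω| ≤ B) (ω : Ω) :
    featureScore μ φ (featureSynthesis ρ F φ) ω =
      ∫ ω', F ω' * featureCorrelation μ φ ω ω' ∂ρ := by
  have hint : Integrable (fun z : X × Ω => F z.2 * (φ z.1 ω * φ z.1 z.2)) (μ.prod ρ) := by
    have hφω : Measurable fun z : X × Ω => φ z.1 ω := by fun_prop
    refine (hF.comp_snd μ).mul_bdd (c := B * B) (hφω.mul hφ).aestronglyMeasurable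
      (ae_of_all _ fun z => ?_)
    rw [norm_mul]
    exact mul_le_mul (hφB _ _) (hφB _ _) (norm_nonneg _) ((abs_nonneg _).trans (hφB z.1 ω))
  calc featureScore μ φ (featureSynthesis ρ F φ) ω
      = ∫ x, ∫ ω', F ω' * (φ x ω * φ x ω') ∂ρ ∂μ := by
        refine integral_congr_ae (ae_of_all _ fun x => ?_)
        simp only [featureSynthesis, ← integral_mul_const, mul_assoc, mul_comm (φ x ω)]
    _ = ∫ ω', ∫ x, F ω' * (φ x ω * φ x ω') ∂μ ∂ρ := integral_integral_swap hint
    _ = ∫ ω', F ω' * featureCorrelation μ φ ω ω' ∂ρ := by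
        simp only [integral_const_mul, featureCorrelation]

end Features

section ReflectedKernel

variable {A E : Type*} [MeasurableSpace A] [AddGroup E] [MeasurableSpace E] [MeasurableNeg E]
  {ν : Measure A} {ρ : Measure E} [ρ.IsNegInvariant] {F K : E → ℝ}

theorem integrable_mul_comp_add_of_even (hF : ∀ u, F (-u) = F u) {v : E}
    (hFK : Integrable (fun u => F u * K (v - u)) ρ) :
    Integrable (fun u => F u * K (v + u)) ρ := by
  simpa only [hF, sub_neg_eq_add] using hFK.comp_neg

theorem integral_mul_comp_add_of_even (hF : ∀ u, F (-u) = F u) (v : E) :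
    ∫ u, F u * K (v + u) ∂ρ = ∫ u, F u * K (v - u) ∂ρ := by
  simpa only [hF, sub_neg_eq_add] using integral_neg_eq_self (fun u => F u * K (v - u)) ρ

theorem integral_prod_mul_reflected_kernel [SFinite ν] [SFinite ρ] {f h h' : A → ℝ}
    (hh : Integrable (fun a => f a * h a) ν) (hh' : Integrable (fun a => f a * h' a) ν)
    (hF : ∀ u, F (-u) = F u) {v : E} (hFK : Integrable (fun u => F u * K (v - u)) ρ) :
    ∫ p : A × E, f p.1 * F p.2 * (h p.1 * K (v - p.2) + h' p.1 * K (v + p.2)) ∂ν.prod ρ =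
      (∫ a, f a * (h a + h' a) ∂ν) * ∫ u, F u * K (v - u) ∂ρ := by
  calc ∫ p : A × E, f p.1 * F p.2 * (h p.1 * K (v - p.2) + h' p.1 * K (v + p.2)) ∂ν.prod ρ
      = ∫ p : A × E, f p.1 * h p.1 * (F p.2 * K (v - p.2)) +
          f p.1 * h' p.1 * (F p.2 * K (v + p.2)) ∂ν.prod ρ := by
        congr 1 with p
        ring
    _ = (∫ a, f a * h a ∂ν) * (∫ u, F u * K (v - u) ∂ρ) +
          (∫ a, f a * h' a ∂ν) * ∫ u, F u * K (v + u) ∂ρ := by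
        rw [integral_add (hh.mul_prod hFK)
            (hh'.mul_prod (integrable_mul_comp_add_of_even hF hFK)),
          integral_prod_mul (fun a => f a * h a) fun u => F u * K (v - u),
          integral_prod_mul (fun a => f a * h' a) fun u => F u * K (v + u)]
    _ = (∫ a, f a * (h a + h' a) ∂ν) * ∫ u, F u * K (v - u) ∂ρ := by
        simp only [mul_add]
        rw [integral_mul_comp_add_of_even hF, integral_add hh hh', add_mul]

end ReflectedKernel

theorem tendsto_integral_abs_div_of_dominated {α ι : Type*} [MeasurableSpace α] {ρ : Measure α}
    {L : Filter ι} [L.IsCountablyGenerated] {s : ι → α → ℝ} {c : ι → ℝ} {f G : α → ℝ}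
    (hs : ∀ᶠ l in L, AEStronglyMeasurable (s l) ρ) (hc : ∀ᶠ l in L, 0 < c l)
    (hG : Integrable G ρ) (hsG : ∀ᶠ l in L, ∀ᵐ u ∂ρ, |s l u| / c l ≤ G u)
    (hlim : ∀ᵐ u ∂ρ, Tendsto (fun l => s l u / c l) L (nhds (f u))) :
    Tendsto (fun l => ∫ u, |s l u| / c l ∂ρ) L (nhds (∫ u, |f u| ∂ρ)) := by
  refine tendsto_integral_filter_of_dominated_convergence G ?_ ?_ hG ?_
  · filter_upwards [hs] with l hsl
    exact (hsl.norm.aemeasurable.div_const (c l)).aestronglyMeasurable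
  · filter_upwards [hsG, hc] with l hsGl hcl
    filter_upwards [hsGl] with u hu
    rwa [Real.norm_of_nonneg (by positivity)]
  · filter_upwards [hlim] with u hu
    refine hu.abs.congr' ?_
    filter_upwards [hc] with l hcl
    rw [abs_div, abs_of_pos hcl]

section Score

variable {A E X : Type*} [MeasurableSpace A] [Neg A] [AddGroup E] [MeasurableSpace E]
  [MeasurableNeg E] [MeasurableSpace X] {ν : Measure A} [SFinite ν] {ρ : Measure E}
  [SFinite ρ] [ρ.IsNegInvariant] {FI : A → ℝ} {FR : E → ℝ} {φ : X → A × E → ℝ} {B : ℝ}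

theorem featureScore_eq_mul_integral_of_orthogonal {μ : Measure X} [IsFiniteMeasure μ]
    (hFI : Integrable FI ν) (hFR : Integrable FR ρ) (hFRe : ∀ u, FR (-u) = FR u)
    (hφ : Measurable (Function.uncurry φ)) (hφB : ∀ x ω, |φ x ω| ≤ B)
    {h : A → ℝ} {K : E → ℝ} {a : A} {v : E}
    (hh : Integrable (fun b => FI b * h b) ν) (hh' : Integrable (fun b => FI b * h (-b)) ν)
    (hFRK : Integrable (fun u => FR u * K (v - u)) ρ)
    (horth : ∀ b u, featureCorrelation μ φ (a, v) (b, u) =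
      h b * K (v - u) + h (-b) * K (v + u)) :
    featureScore μ φ (featureSynthesis (ν.prod ρ) (fun p => FI p.1 * FR p.2) φ) (a, v) =
      (∫ b, FI b * (h b + h (-b)) ∂ν) * ∫ u, FR u * K (v - u) ∂ρ := by
  rw [featureScore_featureSynthesis (hFI.mul_prod hFR) hφ hφB]
  refine (integral_congr_ae (ae_of_all _ fun p => ?_)).trans
    (integral_prod_mul_reflected_kernel hh hh' hFRe hFRK)
  exact congrArg (FI p.1 * FR p.2 * ·) (horth p.1 p.2)

theorem integral_abs_normalized_score_tendsto_general [MeasurableAdd E] [ρ.IsAddLeftInvariant]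
    {ι : Type*} {L : Filter ι} [L.IsCountablyGenerated]
    (hFI : Integrable FI ν) (hFR : Integrable FR ρ) (hFRb : ∃ C, ∀ u, |FR u| ≤ C)
    (hFRe : ∀ u, FR (-u) = FR u)
    {μ : ι → Measure X} (hμ : ∀ᶠ l in L, IsFiniteMeasure (μ l))
    (hφ : Measurable (Function.uncurry φ)) (hφB : ∀ x ω, |φ x ω| ≤ B)
    {HI : A → A → ℝ} {HR : E → ι → ℝ} {c : ι → ℝ} {ωI : A}
    (hHI : Integrable (fun a => FI a * HI ωI a) ν)
    (hHI' : Integrable (fun a => FI a * HI ωI (-a)) ν)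
    (hHR : ∀ᶠ l in L, Integrable (fun u => HR u l) ρ) (hc : ∀ᶠ l in L, 0 < c l)
    (hOrth : ∀ᶠ l in L, ∀ v a u, featureCorrelation (μ l) φ (ωI, v) (a, u) =
      HI ωI a * HR (v - u) l + HI ωI (-a) * HR (v + u) l)
    (hApprox : ∀ᵐ v ∂ρ, Tendsto (fun l => (∫ u, FR u * HR (v - u) l ∂ρ) / c l) L (nhds (FR v)))
    {G : E → ℝ} (hG : Integrable G ρ)
    (hdom : ∀ᶠ l in L, ∀ᵐ u ∂ρ, |featureScore (μ l) φ
      (featureSynthesis (ν.prod ρ) (fun p => FI p.1 * FR p.2) φ) (ωI, u)| / c l ≤ G u) :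
    Tendsto (fun l => ∫ u, |featureScore (μ l) φ
        (featureSynthesis (ν.prod ρ) (fun p => FI p.1 * FR p.2) φ) (ωI, u)| / c l ∂ρ) L
      (nhds (|∫ a, FI a * (HI ωI a + HI ωI (-a)) ∂ν| * ∫ u, |FR u| ∂ρ)) := by
  obtain ⟨C, hC⟩ := hFRb
  simp only [← integral_const_mul, ← abs_mul]
  refine tendsto_integral_abs_div_of_dominated ?_ hc hG hdom ?_
  · filter_upwards [hμ] with l _
    have hf₀ := stronglyMeasurable_featureSynthesis
      (hFI.mul_prod hFR).aestronglyMeasurable hφ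
    exact ((stronglyMeasurable_featureScore hf₀.aestronglyMeasurable hφ).comp_measurable
      measurable_prodMk_left).aestronglyMeasurable
  · filter_upwards [hApprox] with v hv
    refine (hv.const_mul _).congr' ?_
    filter_upwards [hμ, hHR, hOrth] with l _ hHRl hOrthl
    have hFRK : Integrable (fun u => FR u * HR (v - u) l) ρ :=
      (hHRl.comp_sub_left v).bdd_mul hFR.aestronglyMeasurable (ae_of_all _ hC)
    rw [featureScore_eq_mul_integral_of_orthogonal hFI hFR hFRe hφ hφB hHI hHI'
      (K := fun u => HR u l) hFRK (hOrthl v), mul_div_assoc]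

end Score

/-- limit of the normalized integrated absolute score. -/
theorem integral_abs_normalized_score_tendsto
    (q k : ℕ) (X : Type*) [MeasurableSpace X]
    (νI : Measure (Fin q → ℝ)) [IsFiniteMeasure νI]
    (FI : (Fin q → ℝ) → ℝ) (FR : (Fin k → ℝ) → ℝ)
    (hFIc : Continuous FI) (hFIb : ∃ C, ∀ a, |FI a| ≤ C) (hFIi : Integrable FI νI)
    (hFRc : Continuous FR) (hFRb : ∃ C, ∀ u, |FR u| ≤ C) (hFRi : Integrable FR)
    (hFRe : ∀ u, FR (-u) = FR u)
    (μ : ℝ → Measure X) (hμ : ∀ l, 0 < l → IsProbabilityMeasure (μ l))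
    (φ : X → (Fin q → ℝ) × (Fin k → ℝ) → ℝ)
    (hφm : Measurable (Function.uncurry φ))
    (hφb : ∀ x ω, |φ x ω| ≤ 1)
    (HI : (Fin q → ℝ) → (Fin q → ℝ) → ℝ)
    (hHIc : Continuous (Function.uncurry HI)) (hHIb : ∃ C, ∀ a b, |HI a b| ≤ C)
    (HR : (Fin k → ℝ) → ℝ → ℝ)
    (hHRnn : ∀ u l, 0 < l → 0 ≤ HR u l)
    (hHRi : ∀ l, 0 < l → Integrable (fun u => HR u l))
    (c : ℝ → ℝ) (hc : ∀ l, c l = ∫ u, HR u l) (hcpos : ∀ l, 0 < l → 0 < c l)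
    (f₀ : X → ℝ)
    (hf₀ : ∀ x, f₀ x = ∫ p : (Fin q → ℝ) × (Fin k → ℝ),
        FI p.1 * FR p.2 * φ x p ∂(νI.prod volume))
    (S : (Fin q → ℝ) → (Fin k → ℝ) → ℝ → ℝ)
    (hS : ∀ θ w l, S θ w l = ∫ x, f₀ x * φ x (θ, w) ∂(μ l))
    (hOrth : ∀ l, 0 < l → ∀ ωI ωR ωI' ωR',
      (∫ x, φ x (ωI, ωR) * φ x (ωI', ωR') ∂(μ l))
        = HI ωI ωI' * HR (ωR - ωR') l + HI ωI (-ωI') * HR (ωR + ωR') l)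
    (hApprox : ∀ g : (Fin k → ℝ) → ℝ, Continuous g → (∃ C, ∀ u, |g u| ≤ C) → ∀ v : Fin k → ℝ,
      Tendsto (fun l => (∫ u, g u * HR (v - u) l) / c l) atTop (nhds (g v)))
    (ωI : Fin q → ℝ)
    (hdom : ∃ G : (Fin k → ℝ) → ℝ, Integrable G ∧ ∃ l₀ > (0 : ℝ),
      ∀ u : Fin k → ℝ, ∀ l, l₀ ≤ l → |S ωI u l| / c l ≤ G u) :
    Tendsto (fun l => ∫ u, |S ωI u l| / c l) atTop
      (nhds (|∫ a, FI a * (HI ωI a + HI ωI (-a)) ∂νI| * ∫ u, |FR u|)) := by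
  obtain rfl : f₀ = featureSynthesis (νI.prod volume) (fun p => FI p.1 * FR p.2) φ := funext hf₀
  obtain ⟨CH, hCH⟩ := hHIb
  obtain ⟨G, hG, l₀, -, hGb⟩ := hdom
  have hpos : ∀ᶠ l : ℝ in atTop, 0 < l := eventually_gt_atTop 0
  have hHI : Integrable (fun a => FI a * HI ωI a) νI :=
    hFIi.mul_bdd (by fun_prop) (ae_of_all _ fun a => hCH ωI a)
  have hHI' : Integrable (fun a => FI a * HI ωI (-a)) νI :=
    hFIi.mul_bdd (by fun_prop) (ae_of_all _ fun a => hCH ωI (-a))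
  simp only [hS] at hGb ⊢
  exact integral_abs_normalized_score_tendsto_general hFIi hFRi hFRb hFRe
    (hpos.mono fun l hl => have := hμ l hl; inferInstance) hφm hφb hHI hHI'
    (hpos.mono hHRi) (hpos.mono hcpos) (hpos.mono fun l hl v => hOrth l hl ωI v)
    (ae_of_all _ (hApprox FR hFRc hFRb)) hG
    ((eventually_ge_atTop l₀).mono fun l hl => ae_of_all _ fun u => hGb u l hl)
end

section
/- If x_i ∼ N(0, σ_i²) for each i, then E[cos(ωᵀx + θ) cos(ω'ᵀx + θ')] = (1/2) cos(θ + θ') ∏_{i=1}^d exp(−σ_i² (ω_i + ω_i')² / 2) + (1/2) cos(θ − θ') ∏_{i=1}^d exp(−σ_i² (ω_i − ω_i')² / 2). -/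
open MeasureTheory ProbabilityTheory Real

/-!
The product-to-sum formula reduces the expectation to those of `cos ((ω ± ω')ᵀx + (θ ± θ'))`. Each
of these is the real part of `exp (i (θ ± θ'))` times the characteristic function of `x` at
`ω ± ω'`, which factors over the independent coordinates.
-/

section FiniteMeasure

variable {Ω : Type*} {mΩ : MeasurableSpace Ω} {μ : Measure Ω} [IsFiniteMeasure μ] {f g : Ω → ℝ}

theorem integrable_cos_comp (hf : AEMeasurable f μ) : Integrable (fun x ↦ cos (f x)) μ :=
  .of_bound (measurable_cos.comp_aemeasurable hf).aestronglyMeasurable 1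
    (.of_forall fun x ↦ abs_cos_le_one (f x))

theorem integrable_cexp_ofReal_mul_I (hf : AEMeasurable f μ) :
    Integrable (fun x ↦ Complex.exp (f x * Complex.I)) μ :=
  .of_bound (by fun_prop) 1 (.of_forall fun x ↦ (Complex.norm_exp_ofReal_mul_I (f x)).le)

theorem integral_cos_mul_cos (hf : AEMeasurable f μ) (hg : AEMeasurable g μ) :
    ∫ x, cos (f x) * cos (g x) ∂μ =
      (1 / 2) * ∫ x, cos (f x + g x) ∂μ + (1 / 2) * ∫ x, cos (f x - g x) ∂μ := by
  have product_to_sum (x : Ω) :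
      cos (f x) * cos (g x) = (1 / 2) * cos (f x + g x) + (1 / 2) * cos (f x - g x) := by
    linarith [two_mul_cos_mul_cos (f x) (g x)]
  simp_rw [product_to_sum]
  rw [integral_add ((integrable_cos_comp (hf.fun_add hg)).const_mul _)
    ((integrable_cos_comp (hf.fun_sub hg)).const_mul _), integral_const_mul, integral_const_mul]

theorem integral_cos_add_const (hf : AEMeasurable f μ) (c : ℝ) :
    ∫ x, cos (f x + c) ∂μ =
      (Complex.exp (c * Complex.I) * ∫ x, Complex.exp (f x * Complex.I) ∂μ).re := by
  have cos_eq_re (x : Ω) : cos (f x + c) =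
      RCLike.re (Complex.exp (c * Complex.I) * Complex.exp (f x * Complex.I)) := by
    rw [← Complex.exp_add, ← add_mul, ← Complex.ofReal_add, add_comm c]
    exact (Complex.exp_ofReal_mul_I_re _).symm
  simp_rw [cos_eq_re]
  rw [integral_re ((integrable_cexp_ofReal_mul_I hf).const_mul _), integral_const_mul]
  rfl

end FiniteMeasure

section Pi

variable {ι : Type*} [Fintype ι]

theorem integral_cexp_sum_mul_pi (μ : ι → Measure ℝ) [∀ i, SigmaFinite (μ i)] (a : ι → ℝ) :
    ∫ x, Complex.exp ((∑ i, a i * x i : ℝ) * Complex.I) ∂(Measure.pi μ) =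
      ∏ i, charFun (μ i) (a i) := by
  simp_rw [charFun_apply_real, ← integral_fintype_prod_eq_prod, ← Complex.exp_sum,
    ← Finset.sum_mul]
  push_cast
  rfl

theorem prod_charFun_gaussianReal (m : ι → ℝ) (v : ι → NNReal) (a : ι → ℝ) :
    ∏ i, charFun (gaussianReal (m i) (v i)) (a i) =
      Complex.exp ((∑ i, a i * m i : ℝ) * Complex.I) *
        (∏ i, exp (-(v i) * a i ^ 2 / 2) : ℝ) := by
  simp_rw [charFun_gaussianReal, sub_eq_add_neg, Complex.exp_add, Finset.prod_mul_distrib]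
  push_cast
  simp_rw [Finset.sum_mul, Complex.exp_sum, neg_mul, neg_div]

theorem integral_cos_sum_mul_add_pi_gaussianReal (m : ι → ℝ) (v : ι → NNReal) (a : ι → ℝ)
    (c : ℝ) :
    ∫ x, cos ((∑ i, a i * x i) + c) ∂(Measure.pi fun i ↦ gaussianReal (m i) (v i)) =
      cos ((∑ i, a i * m i) + c) * ∏ i, exp (-(v i) * a i ^ 2 / 2) := by
  rw [integral_cos_add_const (Measurable.aemeasurable (by fun_prop)),
    integral_cexp_sum_mul_pi, prod_charFun_gaussianReal, ← mul_assoc, ← Complex.exp_add,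
    ← add_mul, ← Complex.ofReal_add, add_comm c, Complex.re_mul_ofReal, Complex.exp_ofReal_mul_I_re]

theorem expectation_cos_cos_gaussian_general (m : ι → ℝ) (v : ι → NNReal) (ω ω' : ι → ℝ)
    (θ θ' : ℝ) :
    ∫ x, cos ((∑ i, ω i * x i) + θ) * cos ((∑ i, ω' i * x i) + θ')
        ∂(Measure.pi fun i ↦ gaussianReal (m i) (v i)) =
      (1 / 2) * cos ((∑ i, (ω i + ω' i) * m i) + (θ + θ')) *
          ∏ i, exp (-(v i) * (ω i + ω' i) ^ 2 / 2) +
        (1 / 2) * cos ((∑ i, (ω i - ω' i) * m i) + (θ - θ')) *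
          ∏ i, exp (-(v i) * (ω i - ω' i) ^ 2 / 2) := by
  have add_phase (x : ι → ℝ) : ((∑ i, ω i * x i) + θ) + ((∑ i, ω' i * x i) + θ') =
      (∑ i, (ω i + ω' i) * x i) + (θ + θ') := by
    simp_rw [add_mul, Finset.sum_add_distrib, add_add_add_comm]
  have sub_phase (x : ι → ℝ) : ((∑ i, ω i * x i) + θ) - ((∑ i, ω' i * x i) + θ') =
      (∑ i, (ω i - ω' i) * x i) + (θ - θ') := by
    simp_rw [sub_mul, Finset.sum_sub_distrib, add_sub_add_comm]
  rw [integral_cos_mul_cos (Measurable.aemeasurable (by fun_prop))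
    (Measurable.aemeasurable (by fun_prop))]
  simp_rw [add_phase, sub_phase, integral_cos_sum_mul_add_pi_gaussianReal, mul_assoc]

end Pi

/-- expected product of cosines under independent Gaussian inputs. -/
theorem expectation_cos_cos_gaussian
    (d : ℕ) (σ ω ω' : Fin d → ℝ) (hσ : ∀ i, 0 < σ i) (θ θ' : ℝ) :
    (∫ x : Fin d → ℝ,
        Real.cos ((∑ i, ω i * x i) + θ) * Real.cos ((∑ i, ω' i * x i) + θ')
      ∂(Measure.pi fun i => gaussianReal 0 ((σ i) ^ 2).toNNReal))
    = (1 / 2) * Real.cos (θ + θ') *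
        (∏ i, Real.exp (-(σ i) ^ 2 * (ω i + ω' i) ^ 2 / 2))
      + (1 / 2) * Real.cos (θ - θ') *
        (∏ i, Real.exp (-(σ i) ^ 2 * (ω i - ω' i) ^ 2 / 2)) := by
  exact (expectation_cos_cos_gaussian_general 0 (fun i ↦ (σ i ^ 2).toNNReal) ω ω' θ θ').trans
    (by simp [sq_nonneg])
end

section
/- If x_i ∼ Laplace(0, σ_i) for each i (i.e., x_i has density t ↦ (1/(2σ_i)) exp(−|t|/σ_i)), then E[cos(ωᵀx + θ) cos(ω'ᵀx + θ')] = (1/2) cos(θ + θ') ∏_{i=1}^d 1/(1 + σ_i² (ω_i + ω_i')²) + (1/2) cos(θ − θ') ∏_{i=1}^d 1/(1 + σ_i² (ω_i − ω_i')²). -/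
open MeasureTheory Real

/-!
By the product-to-sum formula, `cos A * cos B` is half the sum of `cos (A + B)` and `cos (A - B)`.
The cosine of `∑ i, a i * x i + φ` is the real part of `exp (φ I) * ∏ i, exp (a i * x i * I)`, so
independence factors its expectation into one-dimensional characteristic functions. That of the
Laplace distribution comes from integrating an exponential on each side of the origin.
-/

section BilateralExponential

variable {b c : ℂ}

lemma eqOn_cexp_mul_sub_mul_abs_Ioi (b c : ℂ) :
    Set.EqOn (fun x : ℝ ↦ Complex.exp (b * x - c * |x|)) (fun x ↦ Complex.exp ((b - c) * x))
      (Set.Ioi 0) := by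
  intro x hx
  simp only [abs_of_pos (Set.mem_Ioi.mp hx), sub_mul]

lemma eqOn_cexp_mul_sub_mul_abs_Iic (b c : ℂ) :
    Set.EqOn (fun x : ℝ ↦ Complex.exp (b * x - c * |x|)) (fun x ↦ Complex.exp ((b + c) * x))
      (Set.Iic 0) := by
  intro x hx
  simp only [abs_of_nonpos (Set.mem_Iic.mp hx), Complex.ofReal_neg, mul_neg, sub_neg_eq_add,
    add_mul]

lemma integrableOn_Ioi_cexp_mul_sub_mul_abs (h : b.re < c.re) :
    IntegrableOn (fun x : ℝ ↦ Complex.exp (b * x - c * |x|)) (Set.Ioi 0) := by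
  rw [integrableOn_congr_fun (eqOn_cexp_mul_sub_mul_abs_Ioi b c) measurableSet_Ioi]
  exact integrableOn_exp_mul_complex_Ioi (by simpa using h) 0

lemma integrableOn_Iic_cexp_mul_sub_mul_abs (h : -c.re < b.re) :
    IntegrableOn (fun x : ℝ ↦ Complex.exp (b * x - c * |x|)) (Set.Iic 0) := by
  rw [integrableOn_congr_fun (eqOn_cexp_mul_sub_mul_abs_Iic b c) measurableSet_Iic]
  exact integrableOn_exp_mul_complex_Iic (by rw [Complex.add_re]; linarith) 0

lemma integral_Ioi_cexp_mul_sub_mul_abs (h : b.re < c.re) :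
    ∫ x : ℝ in Set.Ioi 0, Complex.exp (b * x - c * |x|) = 1 / (c - b) := by
  rw [setIntegral_congr_fun measurableSet_Ioi (eqOn_cexp_mul_sub_mul_abs_Ioi b c),
    integral_exp_mul_complex_Ioi (by simpa using h), Complex.ofReal_zero, mul_zero,
    Complex.exp_zero, ← neg_sub c b, neg_div_neg_eq]

lemma integral_Iic_cexp_mul_sub_mul_abs (h : -c.re < b.re) :
    ∫ x : ℝ in Set.Iic 0, Complex.exp (b * x - c * |x|) = 1 / (c + b) := by
  rw [setIntegral_congr_fun measurableSet_Iic (eqOn_cexp_mul_sub_mul_abs_Iic b c),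
    integral_exp_mul_complex_Iic (by rw [Complex.add_re]; linarith), Complex.ofReal_zero,
    mul_zero, Complex.exp_zero, add_comm]

lemma integrable_cexp_mul_sub_mul_abs (h : |b.re| < c.re) :
    Integrable (fun x : ℝ ↦ Complex.exp (b * x - c * |x|)) := by
  obtain ⟨hneg, hpos⟩ := abs_lt.mp h
  rw [← integrableOn_univ, ← Set.Iic_union_Ioi (a := (0 : ℝ))]
  exact (integrableOn_Iic_cexp_mul_sub_mul_abs hneg).union
    (integrableOn_Ioi_cexp_mul_sub_mul_abs hpos)

lemma integral_cexp_mul_sub_mul_abs (h : |b.re| < c.re) :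
    ∫ x : ℝ, Complex.exp (b * x - c * |x|) = 2 * c / (c ^ 2 - b ^ 2) := by
  obtain ⟨hneg, hpos⟩ := abs_lt.mp h
  have hadd : c + b ≠ 0 := fun h0 ↦ by
    have := congrArg Complex.re h0
    simp only [Complex.add_re, Complex.zero_re] at this
    linarith
  have hsub : c - b ≠ 0 := sub_ne_zero.mpr fun h0 ↦ hpos.ne' (congrArg Complex.re h0)
  rw [← intervalIntegral.integral_Iic_add_Ioi (integrableOn_Iic_cexp_mul_sub_mul_abs hneg)
      (integrableOn_Ioi_cexp_mul_sub_mul_abs hpos),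
    integral_Iic_cexp_mul_sub_mul_abs hneg, integral_Ioi_cexp_mul_sub_mul_abs hpos,
    div_add_div _ _ hadd hsub, sq_sub_sq]
  ring

end BilateralExponential

section LaplaceDensity

/-- The density of the centred Laplace distribution with scale `σ`, the law of each coordinate
of the random vector. It is a density only for `0 < σ`: it is negative for `σ < 0`, and at `σ = 0`
the convention `1 / 0 = 0` makes it vanish. -/
noncomputable def laplacePDFReal (σ x : ℝ) : ℝ := (1 / (2 * σ)) * Real.exp (-|x| / σ)

variable {σ : ℝ}

lemma ofReal_laplacePDFReal_mul_cexp (σ t x : ℝ) :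
    (laplacePDFReal σ x : ℂ) * Complex.exp ((t * x : ℝ) * Complex.I) =
      1 / (2 * σ) * Complex.exp (t * Complex.I * x - (1 / σ : ℝ) * |x|) := by
  rw [laplacePDFReal]
  push_cast
  rw [mul_assoc, ← Complex.exp_add]
  ring_nf

lemma abs_re_ofReal_mul_I_lt_re_one_div (hσ : 0 < σ) (t : ℝ) :
    |((t : ℂ) * Complex.I).re| < ((1 / σ : ℝ) : ℂ).re := by
  simpa using hσ

lemma integrable_laplacePDFReal (hσ : 0 < σ) : Integrable (laplacePDFReal σ) := by
  have h := ((integrable_cexp_mul_sub_mul_abs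
    (abs_re_ofReal_mul_I_lt_re_one_div hσ 0)).const_mul (1 / (2 * σ) : ℂ)).re
  simp_rw [← ofReal_laplacePDFReal_mul_cexp] at h
  simpa using h

lemma integral_laplacePDFReal_mul_cexp (hσ : 0 < σ) (t : ℝ) :
    ∫ x, (laplacePDFReal σ x : ℂ) * Complex.exp ((t * x : ℝ) * Complex.I) =
      ((1 / (1 + σ ^ 2 * t ^ 2) : ℝ) : ℂ) := by
  simp_rw [ofReal_laplacePDFReal_mul_cexp]
  rw [integral_const_mul,
    integral_cexp_mul_sub_mul_abs (abs_re_ofReal_mul_I_lt_re_one_div hσ t), mul_pow,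
    Complex.I_sq, mul_neg_one, sub_neg_eq_add]
  norm_cast
  field_simp

end LaplaceDensity

section ProductMeasure

lemma prod_mul_cos_sum_add_eq_re {ι : Type*} [Fintype ι] {α : ι → Type*}
    (f g : ∀ i, α i → ℝ) (φ : ℝ) (x : ∀ i, α i) :
    (∏ i, f i (x i)) * Real.cos ((∑ i, g i (x i)) + φ) =
      RCLike.re (Complex.exp (φ * Complex.I) *
        ∏ i, (f i (x i) : ℂ) * Complex.exp (g i (x i) * Complex.I)) := by
  rw [Finset.prod_mul_distrib, ← Complex.exp_sum, ← Finset.sum_mul, mul_left_comm,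
    ← Complex.exp_add, ← add_mul, add_comm (φ : ℂ)]
  norm_cast
  rw [RCLike.re_to_complex, Complex.re_ofReal_mul, Complex.exp_ofReal_mul_I_re]

lemma integrable_ofReal_mul_cexp_mul_I {β : Type*} [MeasurableSpace β] {ν : Measure β}
    {u v : β → ℝ} (hu : Integrable u ν) (hv : AEStronglyMeasurable v ν) :
    Integrable (fun t ↦ (u t : ℂ) * Complex.exp (v t * Complex.I)) ν := by
  refine hu.ofReal.mul_bdd (c := 1) ?_ (.of_forall fun t ↦ (Complex.norm_exp_ofReal_mul_I _).le)
  have hcont : Continuous fun r : ℝ ↦ Complex.exp (r * Complex.I) := by fun_prop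
  exact hcont.comp_aestronglyMeasurable hv

variable {ι : Type*} [Fintype ι] {α : ι → Type*} [∀ i, MeasurableSpace (α i)]
  {μ : ∀ i, Measure (α i)} [∀ i, SigmaFinite (μ i)] {f g : ∀ i, α i → ℝ}

lemma integrable_cexp_mul_prod_mul_cexp (hf : ∀ i, Integrable (f i) (μ i))
    (hg : ∀ i, AEStronglyMeasurable (g i) (μ i)) (φ : ℝ) :
    Integrable (fun x : ∀ i, α i ↦ Complex.exp (φ * Complex.I) *
      ∏ i, (f i (x i) : ℂ) * Complex.exp (g i (x i) * Complex.I)) (Measure.pi μ) :=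
  (Integrable.fintype_prod_dep fun i ↦
    integrable_ofReal_mul_cexp_mul_I (hf i) (hg i)).const_mul _

lemma integrable_prod_mul_cos_sum_add (hf : ∀ i, Integrable (f i) (μ i))
    (hg : ∀ i, AEStronglyMeasurable (g i) (μ i)) (φ : ℝ) :
    Integrable (fun x : ∀ i, α i ↦ (∏ i, f i (x i)) * Real.cos ((∑ i, g i (x i)) + φ))
      (Measure.pi μ) := by
  simp_rw [prod_mul_cos_sum_add_eq_re]
  exact (integrable_cexp_mul_prod_mul_cexp hf hg φ).re

lemma integral_prod_mul_cos_sum_add (hf : ∀ i, Integrable (f i) (μ i))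
    (hg : ∀ i, AEStronglyMeasurable (g i) (μ i)) (φ : ℝ) :
    ∫ x, (∏ i, f i (x i)) * Real.cos ((∑ i, g i (x i)) + φ) ∂Measure.pi μ =
      (Complex.exp (φ * Complex.I) *
        ∏ i, ∫ t, (f i t : ℂ) * Complex.exp (g i t * Complex.I) ∂μ i).re := by
  simp_rw [prod_mul_cos_sum_add_eq_re]
  rw [integral_re (integrable_cexp_mul_prod_mul_cexp hf hg φ), integral_const_mul,
    integral_fintype_prod_eq_prod fun i t ↦ (f i t : ℂ) * Complex.exp (g i t * Complex.I),
    RCLike.re_to_complex]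

end ProductMeasure

section LaplaceProduct

variable {ι : Type*} [Fintype ι] {σ : ι → ℝ}

lemma integrable_prod_laplacePDFReal_mul_cos (hσ : ∀ i, 0 < σ i) (a : ι → ℝ) (φ : ℝ) :
    Integrable fun x : ι → ℝ ↦
      (∏ i, laplacePDFReal (σ i) (x i)) * Real.cos ((∑ i, a i * x i) + φ) :=
  integrable_prod_mul_cos_sum_add (g := fun i t ↦ a i * t)
    (fun i ↦ integrable_laplacePDFReal (hσ i)) (fun _ ↦ by fun_prop) φ

lemma integral_prod_laplacePDFReal_mul_cos (hσ : ∀ i, 0 < σ i) (a : ι → ℝ) (φ : ℝ) :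
    ∫ x : ι → ℝ, (∏ i, laplacePDFReal (σ i) (x i)) * Real.cos ((∑ i, a i * x i) + φ) =
      Real.cos φ * ∏ i, 1 / (1 + σ i ^ 2 * a i ^ 2) := by
  rw [volume_pi, integral_prod_mul_cos_sum_add (g := fun i t ↦ a i * t)
    (fun i ↦ integrable_laplacePDFReal (hσ i)) (fun _ ↦ by fun_prop) φ]
  simp_rw [integral_laplacePDFReal_mul_cexp (hσ _)]
  rw [← Complex.ofReal_prod, Complex.re_mul_ofReal, Complex.exp_ofReal_mul_I_re]

lemma cos_sum_add_mul_cos_sum_add (ω ω' x : ι → ℝ) (θ θ' : ℝ) :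
    Real.cos ((∑ i, ω i * x i) + θ) * Real.cos ((∑ i, ω' i * x i) + θ') =
      1 / 2 * Real.cos ((∑ i, (ω i + ω' i) * x i) + (θ + θ')) +
        1 / 2 * Real.cos ((∑ i, (ω i - ω' i) * x i) + (θ - θ')) := by
  simp only [add_mul, sub_mul, Finset.sum_add_distrib, Finset.sum_sub_distrib]
  rw [add_add_add_comm, ← add_sub_add_comm, Real.cos_add (_ + θ), Real.cos_sub (_ + θ)]
  ring

theorem expectation_cos_cos_laplace_general (hσ : ∀ i, 0 < σ i) (ω ω' : ι → ℝ) (θ θ' : ℝ) :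
    ∫ x : ι → ℝ, (∏ i, laplacePDFReal (σ i) (x i)) *
        (Real.cos ((∑ i, ω i * x i) + θ) * Real.cos ((∑ i, ω' i * x i) + θ')) =
      1 / 2 * Real.cos (θ + θ') * (∏ i, 1 / (1 + σ i ^ 2 * (ω i + ω' i) ^ 2)) +
        1 / 2 * Real.cos (θ - θ') * ∏ i, 1 / (1 + σ i ^ 2 * (ω i - ω' i) ^ 2) := by
  simp_rw [cos_sum_add_mul_cos_sum_add, mul_add, mul_left_comm _ (1 / 2 : ℝ)]
  rw [integral_add
      ((integrable_prod_laplacePDFReal_mul_cos hσ _ _).const_mul _)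
      ((integrable_prod_laplacePDFReal_mul_cos hσ _ _).const_mul _),
    integral_const_mul, integral_const_mul, integral_prod_laplacePDFReal_mul_cos hσ,
    integral_prod_laplacePDFReal_mul_cos hσ, mul_assoc, mul_assoc]

end LaplaceProduct

/-- expected product of cosines under independent Laplace inputs,
with the expectation written via the product density ∏ i, (1/(2σ_i)) exp(−|x_i|/σ_i). -/
theorem expectation_cos_cos_laplace
    (d : ℕ) (σ ω ω' : Fin d → ℝ) (hσ : ∀ i, 0 < σ i) (θ θ' : ℝ) :
    (∫ x : Fin d → ℝ,
        (∏ i, (1 / (2 * σ i)) * Real.exp (-|x i| / σ i)) *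
          (Real.cos ((∑ i, ω i * x i) + θ) * Real.cos ((∑ i, ω' i * x i) + θ')))
    = (1 / 2) * Real.cos (θ + θ') * (∏ i, 1 / (1 + (σ i) ^ 2 * (ω i + ω' i) ^ 2))
      + (1 / 2) * Real.cos (θ - θ') * (∏ i, 1 / (1 + (σ i) ^ 2 * (ω i - ω' i) ^ 2)) :=
  expectation_cos_cos_laplace_general hσ ω ω' θ θ'
end
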